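/- arXiv:1006.5285 — 3 statements merged into one kernel-verified Lean document; each statement's English description precedes it below -/
import Mathlib

section
/- For a Hausdorff topological abelian group G the following conditions are equivalent: (a) G is almost minimal; (b) there exists a GTG neighborhood U of 0 such that G is U-locally minimal and the quotient group G/U_∞ is UFSS; (c) there exists a GTG neighborhood U of 0 such that G is U-locally minimal and for every neighborhood V of 0 there exist n ∈ ℕ and a finite subset F ⊆ U_∞ with (1/n)U ⊆ F + V. -/
open scoped Pointwise

/-- `(1/n)U = {x : kx ∈ U for all 1 ≤ k ≤ n}`. -/
def invDiv {G : Type*} [AddGroup G] (n : ℕ) (U : Set G) : Set G :=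
  {x | ∀ k : ℕ, 1 ≤ k → k ≤ n → k • x ∈ U}

/-- `U_∞ = {x : nx ∈ U for all n ∈ ℕ}`. -/
def uInf {G : Type*} [AddGroup G] (U : Set G) : Set G :=
  {x | ∀ n : ℕ, 1 ≤ n → n • x ∈ U}

/-- A symmetric subset `U ∋ 0` is a *GTG set* if the sets `(1/n)U` form a neighborhood
basis at `0` of a (not necessarily Hausdorff) group topology; equivalently,
`(1/m)U + (1/m)U ⊆ U` for some `m ∈ ℕ`. -/
def IsGTG {G : Type*} [AddGroup G] (U : Set G) : Prop :=
  (0 : G) ∈ U ∧ (∀ x ∈ U, -x ∈ U) ∧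
    ∃ m : ℕ, 1 ≤ m ∧ ∀ x ∈ invDiv m U, ∀ y ∈ invDiv m U, x + y ∈ U

/-- A Hausdorff topological abelian group is *UFSS* if there is a symmetric neighborhood
`U` of `0` such that the sets `(1/n)U`, `n ∈ ℕ`, form a neighborhood basis at `0`. -/
def IsUFSS (G : Type*) [AddGroup G] [TopologicalSpace G] : Prop :=
  ∃ U ∈ nhds (0 : G), (∀ x ∈ U, -x ∈ U) ∧
    (∀ n : ℕ, 1 ≤ n → invDiv n U ∈ nhds (0 : G)) ∧
    (∀ V ∈ nhds (0 : G), ∃ n : ℕ, 1 ≤ n ∧ invDiv n U ⊆ V)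

/-- `(G, τ)` is *`U`-locally minimal* if the only Hausdorff group topology `σ` coarser
than `τ` for which `U` is still a `σ`-neighborhood of `0` is `τ` itself. -/
def LocallyMinimalAt (G : Type*) [AddGroup G] [τ : TopologicalSpace G] (U : Set G) : Prop :=
  ∀ σ : TopologicalSpace G, τ ≤ σ →
    @IsTopologicalAddGroup G σ _ → @T2Space G σ → U ∈ @nhds G σ 0 → σ = τ

/-- A Hausdorff topological abelian group `(G, τ)` is *minimal* if there is no Hausdorff
group topology on `G` strictly coarser than `τ`. -/
def IsMinimal (G : Type*) [AddGroup G] [τ : TopologicalSpace G] : Prop :=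
  ∀ σ : TopologicalSpace G, τ ≤ σ →
    @IsTopologicalAddGroup G σ _ → @T2Space G σ → σ = τ

/-- A Hausdorff topological abelian group is *almost minimal* if it has a closed minimal
subgroup `N` such that `G/N` is UFSS. -/
def IsAlmostMinimal (G : Type*) [AddCommGroup G] [TopologicalSpace G] : Prop :=
  ∃ N : AddSubgroup G, IsClosed (N : Set G) ∧ IsMinimal ↥N ∧ IsUFSS (G ⧸ N)

/-!
If `N` is a closed minimal subgroup with `G ⧸ N` UFSS, the preimage `U` of a UFSS neighbourhood in
`G ⧸ N` is a GTG set with `U_∞ = N`, and the sets `(1/n)U` are eventually contained in each `N + V`.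
A coarser Hausdorff group topology in which `U` is a neighbourhood of `0` agrees with the original
one on `N` by minimality and modulo `N` by this basis property, so the two coincide. Conversely,
every group topology on `U_∞` coarser than the given one can be spread to `G` without destroying the
neighbourhood `U`, so `U_∞` is minimal when `G` is `U`-locally minimal. For such `U`, the
quotient `G ⧸ U_∞` is UFSS as soon as every `U_∞ + V` contains some `(1/n)U`. Replacing `U_∞` by a
finite subset is possible by the Prodanov–Stoyanov theorem that minimal abelian groups are
precompact.

To prove that theorem, suppose first that no subgroup `kG`, `k ≠ 0`, is covered by finitely many
translates of the neighbourhood `U` of `0`. One then chooses a sequence whose integer combinations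
with coefficients `|c i| ≤ 2 ^ i` stay outside a fixed neighbourhood of `0`, and making combinations
with slowly growing coefficients small yields a strictly coarser Hausdorff topology. So the `k!G`
are eventually covered by finitely many translates of any given neighbourhood. It remains to see
that `nG` is totally bounded modulo `npG` for every `n` and every prime `p`. If this fails, there is
a uniformly discrete sequence in `nG` whose small combinations have coefficients divisible by `p`,
its `i`-th term being moreover divisible by the part of `i!` prime to `p`. The span of the sequence
has open subgroups that are eventually covered by finitely many translates of any neighbourhood.
Such a group has enough continuous characters: Peter–Weyl provides them on the compact intersection
of these subgroups in the completion, and they extend by stability of almost homomorphisms. Hence,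
by minimality, the closure of the span is precompact, contradicting uniform discreteness.
-/

open Filter Set Topology

section CoarserTopologies

variable {G : Type*} [AddCommGroup G]

/-- The axioms of a neighbourhood filter of `0` for a group topology on an abelian group, in terms
of the pointwise operations on filters. -/
structure IsGroupFilter (𝓑 : Filter G) : Prop where
  pure_zero_le : pure 0 ≤ 𝓑
  neg_le : -𝓑 ≤ 𝓑
  add_le : 𝓑 + 𝓑 ≤ 𝓑

theorem isGroupFilter_nhds_zero [TopologicalSpace G] [IsTopologicalAddGroup G] :
    IsGroupFilter (𝓝 (0 : G)) where
  pure_zero_le := pure_le_nhds 0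
  neg_le := by rw [← nhds_neg, neg_zero]
  add_le := by rw [← nhds_add, add_zero]

namespace IsGroupFilter

variable {𝓑 𝓒 : Filter G}

theorem add (hB : IsGroupFilter 𝓑) (hC : IsGroupFilter 𝓒) : IsGroupFilter (𝓑 + 𝓒) where
  pure_zero_le := by
    rw [← add_zero (pure 0 : Filter G)]
    exact add_le_add hB.pure_zero_le hC.pure_zero_le
  neg_le := by
    rw [neg_add]
    exact add_le_add hB.neg_le hC.neg_le
  add_le := by
    rw [add_add_add_comm]
    exact add_le_add hB.add_le hC.add_le

theorem map {H : Type*} [AddCommGroup H] (hB : IsGroupFilter 𝓑) (f : G →+ H) :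
    IsGroupFilter (𝓑.map f) where
  pure_zero_le := by
    rw [← map_zero f, ← Filter.map_pure]
    exact Filter.map_mono hB.pure_zero_le
  neg_le := by
    rw [← Filter.map_neg' f]
    exact Filter.map_mono hB.neg_le
  add_le := by
    rw [← Filter.map_add f]
    exact Filter.map_mono hB.add_le

theorem exists_nhds_zero_eq (hB : IsGroupFilter 𝓑) :
    ∃ σ : TopologicalSpace G, @IsTopologicalAddGroup G σ _ ∧ @nhds G σ 0 = 𝓑 := by
  let basis : AddGroupFilterBasis G :=
    { 𝓑.asBasis with
      zero' := fun h => hB.pure_zero_le h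
      add' := fun h => by
        obtain ⟨A, hA, C, hC, h⟩ := Filter.mem_add.1 (hB.add_le h)
        exact ⟨A ∩ C, inter_mem hA hC,
          (Set.add_subset_add inter_subset_left inter_subset_right).trans h⟩
      neg' := fun h => ⟨_, Filter.mem_neg.1 (hB.neg_le h), subset_rfl⟩
      conj' := fun x S h => ⟨S, h, fun y hy => by simpa using hy⟩ }
  refine ⟨basis.topology, basis.isTopologicalAddGroup, ?_⟩
  exact basis.nhds_zero_eq.trans 𝓑.asBasis_filter

end IsGroupFilter

theorem isMinimal_iff_locallyMinimalAt_univ {G : Type*} [AddGroup G] [TopologicalSpace G] :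
    IsMinimal G ↔ LocallyMinimalAt G (univ : Set G) := by
  simp only [IsMinimal, LocallyMinimalAt, univ_mem, forall_const]

variable [τ : TopologicalSpace G] [IsTopologicalAddGroup G]

theorem LocallyMinimalAt.le_nhds_zero {U : Set G} (hmin : LocallyMinimalAt G U) {𝓑 : Filter G}
    (hB : IsGroupFilter 𝓑) (hsep : ∀ x : G, x ≠ 0 → {x}ᶜ ∈ 𝓝 0 + 𝓑) (hU : U ∈ 𝓝 0 + 𝓑) :
    𝓑 ≤ 𝓝 0 := by
  have hτ_le : 𝓝 0 ≤ 𝓝 0 + 𝓑 := by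
    simpa only [pure_zero, add_zero] using add_le_add_right hB.pure_zero_le (𝓝 (0 : G))
  have hB_le : 𝓑 ≤ 𝓝 0 + 𝓑 := by
    simpa only [pure_zero, zero_add] using add_le_add_left (pure_le_nhds (0 : G)) 𝓑
  obtain ⟨σ, hσ, hnhds⟩ := (isGroupFilter_nhds_zero.add hB).exists_nhds_zero_eq
  have hle : τ ≤ σ := by
    refine le_of_nhds_le_nhds fun x => ?_
    rw [← @map_add_left_nhds_zero G τ _ _ x, ← @map_add_left_nhds_zero G σ _ _ x, hnhds]
    exact Filter.map_mono hτ_le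
  have hT2 : @T2Space G σ := IsTopologicalAddGroup.t2Space_of_zero_sep fun x hx =>
    ⟨{x}ᶜ, hnhds ▸ hsep x hx, not_not.2 rfl⟩
  have hστ : σ = τ := hmin σ hle hσ hT2 (hnhds ▸ hU)
  rwa [← hnhds, hστ] at hB_le

theorem IsMinimal.le_nhds_zero (hmin : IsMinimal G) {𝓑 : Filter G} (hB : IsGroupFilter 𝓑)
    (hsep : ∀ x : G, x ≠ 0 → {x}ᶜ ∈ 𝓝 0 + 𝓑) : 𝓑 ≤ 𝓝 0 :=
  (isMinimal_iff_locallyMinimalAt_univ.1 hmin).le_nhds_zero hB hsep univ_mem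

theorem LocallyMinimalAt.isMinimal_of_add_mem {U : Set G} (hmin : LocallyMinimalAt G U)
    {N : AddSubgroup G} (hN : IsClosed (N : Set G)) (hNU : U ∈ 𝓝 0 + 𝓟 (N : Set G)) :
    IsMinimal N := by
  intro σ hle hσ hT2
  have hB : IsGroupFilter ((@nhds N σ 0).map N.subtype) :=
    (@isGroupFilter_nhds_zero N _ σ hσ).map N.subtype
  have hBN : (@nhds N σ 0).map N.subtype ≤ 𝓟 (N : Set G) :=
    le_principal_iff.2 (mem_map.2 (univ_mem' fun x => x.2))
  suffices h : (@nhds N σ 0).map N.subtype ≤ 𝓝 (0 : G) by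
    refine IsTopologicalAddGroup.ext hσ inferInstance (le_antisymm ?_ (nhds_mono hle))
    rw [nhds_subtype_eq_comap]
    exact map_le_iff_le_comap.1 h
  refine hmin.le_nhds_zero hB (fun x hx => ?_) (add_le_add le_rfl hBN hNU)
  by_cases hxN : x ∈ N
  · have hxσ : ({⟨x, hxN⟩}ᶜ : Set N) ∈ @nhds N σ 0 :=
      isOpen_compl_singleton.mem_nhds fun h => hx (congrArg Subtype.val h).symm
    obtain ⟨W, hW, hWW⟩ := exists_nhds_zero_half hxσ
    obtain ⟨V, hV, hVW⟩ := (mem_nhds_subtype _ _ _).1 (nhds_mono hle hW)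
    refine Filter.mem_add.2 ⟨V, hV, N.subtype '' W, image_mem_map hW, ?_⟩
    rintro _ ⟨v, hv, _, ⟨w, hw, rfl⟩, rfl⟩ rfl
    have hvN : v ∈ N := (N.add_mem_cancel_right w.2).1 hxN
    exact hWW ⟨v, hvN⟩ (hVW hv) w hw rfl
  · have hV : (fun v => x - v) ⁻¹' (N : Set G)ᶜ ∈ 𝓝 (0 : G) :=
      (hN.isOpen_compl.preimage (by fun_prop)).mem_nhds (by simpa using hxN)
    refine Filter.mem_add.2 ⟨_, hV, N, le_principal_iff.1 hBN, ?_⟩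
    rintro _ ⟨v, hv, w, hw, rfl⟩ rfl
    exact hv (by simpa using hw)

end CoarserTopologies

section GTG

section AddGroup

variable {G : Type*} [AddGroup G] {U : Set G}

theorem uInf_subset_invDiv (n : ℕ) : uInf U ⊆ invDiv n U :=
  fun _ hx k hk _ => hx k hk

theorem mem_uInf_of_forall_mem_invDiv {x : G} (h : ∀ n, x ∈ invDiv n U) : x ∈ uInf U :=
  fun n hn => h n n hn le_rfl

theorem nsmul_mem_invDiv {m n k : ℕ} {x : G} (hx : x ∈ invDiv (m * n) U) (hk : 1 ≤ k)
    (hkn : k ≤ n) : k • x ∈ invDiv m U := fun l hl hlm => by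
  rw [← mul_nsmul']
  exact hx (l * k) (Nat.mul_pos hl hk) (Nat.mul_le_mul hlm hkn)

end AddGroup

variable {G : Type*} [AddCommGroup G] {U : Set G}

theorem invDiv_mul_add_subset {m : ℕ} (hm : ∀ x ∈ invDiv m U, ∀ y ∈ invDiv m U, x + y ∈ U)
    (n : ℕ) : invDiv (m * n) U + invDiv (m * n) U ⊆ invDiv n U := by
  rintro _ ⟨x, hx, y, hy, rfl⟩ k hk hkn
  rw [smul_add]
  exact hm _ (nsmul_mem_invDiv hx hk hkn) _ (nsmul_mem_invDiv hy hk hkn)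

/-- The set `U_∞` of a GTG set `U`, as a subgroup. -/
def IsGTG.uInfSubgroup (hU : IsGTG U) : AddSubgroup G where
  carrier := uInf U
  zero_mem' n _ := by simpa using hU.1
  neg_mem' hx n hn := by simpa using hU.2.1 _ (hx n hn)
  add_mem' {x y} hx hy := by
    obtain ⟨m, -, hm⟩ := hU.2.2
    exact mem_uInf_of_forall_mem_invDiv fun n => invDiv_mul_add_subset hm n
      (add_mem_add (uInf_subset_invDiv _ hx) (uInf_subset_invDiv _ hy))

theorem IsGTG.coe_uInfSubgroup (hU : IsGTG U) : (hU.uInfSubgroup : Set G) = uInf U := rfl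

variable [TopologicalSpace G] [IsTopologicalAddGroup G]

theorem invDiv_mem_nhds_zero (hU : U ∈ 𝓝 0) (n : ℕ) : invDiv n U ∈ 𝓝 0 := by
  have hsmul : ∀ k ∈ Finset.Icc 1 n, ∀ᶠ x : G in 𝓝 0, k • x ∈ U := fun k _ =>
    (continuous_const_smul k).continuousAt.eventually_mem (by simpa using hU)
  filter_upwards [(Filter.eventually_all_finset _).2 hsmul] with x hx k hk hkn
  exact hx k (Finset.mem_Icc.2 ⟨hk, hkn⟩)

theorem IsGTG.isClosed_uInf (hU : IsGTG U) (hU0 : U ∈ 𝓝 0) : IsClosed (uInf U) := by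
  obtain ⟨m, -, hm⟩ := hU.2.2
  refine closure_subset_iff_isClosed.1 fun x hx => mem_uInf_of_forall_mem_invDiv fun n => ?_
  have hnear : ∀ᶠ y in 𝓝 x, x - y ∈ invDiv (m * n) U :=
    ContinuousAt.eventually_mem (by fun_prop) (by simpa using invDiv_mem_nhds_zero hU0 (m * n))
  obtain ⟨y, hyx, hy⟩ := mem_closure_iff_nhds.1 hx _ hnear
  simpa using invDiv_mul_add_subset hm n (add_mem_add hyx (uInf_subset_invDiv (m * n) hy))

theorem LocallyMinimalAt.isMinimal_uInf (hmin : LocallyMinimalAt G U) (hU : IsGTG U)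
    (hU0 : U ∈ 𝓝 0) {N : AddSubgroup G} (hN : (N : Set G) = uInf U) : IsMinimal N := by
  obtain ⟨m, -, hm⟩ := hU.2.2
  refine hmin.isMinimal_of_add_mem (hN ▸ hU.isClosed_uInf hU0) (Filter.mem_add.2
    ⟨invDiv m U, invDiv_mem_nhds_zero hU0 m, N, mem_principal_self _, ?_⟩)
  rintro _ ⟨x, hx, y, hy, rfl⟩
  exact hm x hx y (uInf_subset_invDiv m (hN ▸ hy))

theorem IsGTG.isUFSS_quotient (hU : IsGTG U) (hU0 : U ∈ 𝓝 0) {N : AddSubgroup G}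
    (hN : (N : Set G) = uInf U) (hbasis : ∀ V ∈ 𝓝 (0 : G), ∃ n, invDiv n U ⊆ N + V) :
    IsUFSS (G ⧸ N) := by
  obtain ⟨m, -, hm⟩ := hU.2.2
  have hmem : (QuotientAddGroup.mk : G → G ⧸ N) '' invDiv m U ∈ 𝓝 0 :=
    QuotientAddGroup.isOpenMap_coe.image_mem_nhds (invDiv_mem_nhds_zero hU0 m)
  refine ⟨_, hmem, ?_, fun n _ => invDiv_mem_nhds_zero hmem n, fun V hV => ?_⟩
  · rintro _ ⟨x, hx, rfl⟩
    exact ⟨-x, fun k hk hkm => by simpa using hU.2.1 _ (hx k hk hkm), rfl⟩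
  · have hV' : (QuotientAddGroup.mk : G → G ⧸ N) ⁻¹' V ∈ 𝓝 0 :=
      QuotientAddGroup.continuous_mk.continuousAt.preimage_mem_nhds hV
    obtain ⟨n, hn⟩ := hbasis _ hV'
    refine ⟨n + 1, n.succ_pos, fun y hy => ?_⟩
    obtain ⟨x, rfl⟩ := QuotientAddGroup.mk_surjective y
    have hx : x ∈ invDiv n U := fun k hk hkn => by
      obtain ⟨z, hz, hzx⟩ := hy k hk (hkn.trans n.le_succ)
      have hmem : -z + k • x ∈ uInf U := hN ▸ SetLike.mem_coe.2 (QuotientAddGroup.eq.1 hzx)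
      have hadd := hm z hz _ (uInf_subset_invDiv m hmem)
      rwa [add_neg_cancel_left] at hadd
    obtain ⟨w, hw, v, hv, rfl⟩ := hn hx
    rwa [QuotientAddGroup.mk_add, (QuotientAddGroup.eq_zero_iff w).2 hw, zero_add]

theorem IsUFSS.exists_isGTG {N : AddSubgroup G} (hN : IsClosed (N : Set G))
    (h : IsUFSS (G ⧸ N)) : ∃ U ∈ 𝓝 (0 : G), IsGTG U ∧ (N : Set G) = uInf U ∧
      ∀ V ∈ 𝓝 (0 : G), ∃ n, 1 ≤ n ∧ invDiv n U ⊆ N + V := by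
  obtain ⟨U, hU0, hsymm, -, hbasis⟩ := h
  set π : G → G ⧸ N := QuotientAddGroup.mk
  have hπU : π ⁻¹' U ∈ 𝓝 0 := QuotientAddGroup.continuous_mk.continuousAt.preimage_mem_nhds hU0
  have hinv : ∀ V ∈ 𝓝 (0 : G), ∃ n, 1 ≤ n ∧ invDiv n (π ⁻¹' U) ⊆ N + V := fun V hV => by
    obtain ⟨n, hn, hnV⟩ := hbasis (π '' V) (QuotientAddGroup.isOpenMap_coe.image_mem_nhds hV)
    refine ⟨n, hn, ?_⟩
    rw [add_comm, ← QuotientAddGroup.preimage_image_mk_eq_add]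
    exact fun x hx => hnV hx
  refine ⟨π ⁻¹' U, hπU, ⟨mem_of_mem_nhds hπU, fun x hx => hsymm _ hx, ?_⟩, ?_, hinv⟩
  · obtain ⟨W, hW, hWU⟩ := exists_nhds_zero_half hU0
    obtain ⟨n, hn, hnW⟩ := hbasis W hW
    exact ⟨n, hn, fun x hx y hy => hWU (π x) (hnW hx) (π y) (hnW hy)⟩
  · refine Subset.antisymm (fun x hx n _ => ?_) (fun x hx => ?_)
    · have hnx : π (n • x) = 0 := (QuotientAddGroup.eq_zero_iff _).2 (N.nsmul_mem hx n)
      exact mem_preimage.2 (hnx ▸ mem_of_mem_nhds hU0)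
    · rw [← hN.closure_eq]
      refine mem_closure_iff_nhds_zero.2 fun V hV => ?_
      obtain ⟨n, -, hnV⟩ := hinv (-V) (neg_mem_nhds_zero G hV)
      obtain ⟨y, hy, v, hv, rfl⟩ := hnV (uInf_subset_invDiv n hx)
      exact ⟨y, hy, by simpa using hv⟩

end GTG

section LocalMinimality

variable {G : Type*} [AddCommGroup G] [τ : TopologicalSpace G] {N : AddSubgroup G}

theorem IsMinimal.nhdsWithin_zero_le (hN : IsMinimal N) {σ : TopologicalSpace G}
    (hσ : @IsTopologicalAddGroup G σ _) (hT2 : @T2Space G σ) (hle : τ ≤ σ) :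
    @nhdsWithin G σ 0 N ≤ @nhds G τ 0 := by
  have heq : @instTopologicalSpaceSubtype G (· ∈ N) σ = @instTopologicalSpaceSubtype G _ τ :=
    hN _ (induced_mono hle) (@AddSubgroup.instIsTopologicalAddGroupSubtypeMem G σ _ hσ N)
      (@instT2SpaceSubtype G σ _ hT2)
  calc @nhdsWithin G σ 0 N = (@nhds N (@instTopologicalSpaceSubtype G _ σ) 0).map (↑) :=
        (@map_nhds_subtype_val G σ N 0).symm
    _ = (@nhds N (@instTopologicalSpaceSubtype G _ τ) 0).map (↑) := by rw [heq]
    _ = @nhdsWithin G τ 0 N := @map_nhds_subtype_val G τ N 0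
    _ ≤ @nhds G τ 0 := @nhdsWithin_le_nhds G τ 0 N

theorem IsMinimal.locallyMinimalAt_of_invDiv_subset [IsTopologicalAddGroup G] {U : Set G}
    (hN : IsMinimal N) (hbasis : ∀ V ∈ 𝓝 (0 : G), ∃ n, invDiv n U ⊆ N + V) :
    LocallyMinimalAt G U := by
  intro σ hle hσ hT2 hU
  refine IsTopologicalAddGroup.ext hσ inferInstance (le_antisymm (fun V hV => ?_) (nhds_mono hle))
  obtain ⟨V₁, hV₁, hV₁V⟩ := @exists_nhds_zero_half G τ _ _ V hV
  obtain ⟨O, hO, hON⟩ := (@mem_nhdsWithin_iff_exists_mem_nhds_inter G σ _ _ _).1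
    (@IsMinimal.nhdsWithin_zero_le G _ τ N hN σ hσ hT2 hle V₁ hV₁)
  obtain ⟨O₁, hO₁, hO₁O⟩ := @exists_nhds_zero_half G σ _ _ O hO
  obtain ⟨n, hn⟩ := hbasis (V₁ ∩ -O₁)
    (inter_mem hV₁ (nhds_mono hle (@neg_mem_nhds_zero G σ _ _ _ hO₁)))
  filter_upwards [@invDiv_mem_nhds_zero G _ U σ hσ hU n, hO₁] with x hx hxO
  obtain ⟨y, hy, v, ⟨hvV, hvO⟩, rfl⟩ := hn hx
  have hyO : y ∈ O := by simpa using hO₁O _ hxO _ hvO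
  exact hV₁V y (hON ⟨hyO, hy⟩) v hvV

theorem IsAlmostMinimal.exists_isGTG [IsTopologicalAddGroup G] (h : IsAlmostMinimal G) :
    ∃ U ∈ 𝓝 (0 : G), IsGTG U ∧ LocallyMinimalAt G U ∧ ∃ N : AddSubgroup G,
      (N : Set G) = uInf U ∧ IsMinimal N ∧ IsUFSS (G ⧸ N) ∧
        ∀ V ∈ 𝓝 (0 : G), ∃ n, 1 ≤ n ∧ invDiv n U ⊆ N + V := by
  obtain ⟨N, hNclosed, hNmin, hNufss⟩ := h
  obtain ⟨U, hU0, hU, hNU, hbasis⟩ := hNufss.exists_isGTG hNclosed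
  have hmin : LocallyMinimalAt G U := hNmin.locallyMinimalAt_of_invDiv_subset fun V hV =>
    (hbasis V hV).imp fun _ hn => hn.2
  exact ⟨U, hU0, hU, hmin, N, hNU, hNmin, hNufss, hbasis⟩

theorem LocallyMinimalAt.isAlmostMinimal [IsTopologicalAddGroup G] {U : Set G}
    (hmin : LocallyMinimalAt G U) (hU : IsGTG U) (hU0 : U ∈ 𝓝 0) (hN : (N : Set G) = uInf U)
    (hNufss : IsUFSS (G ⧸ N)) : IsAlmostMinimal G :=
  ⟨N, hN ▸ hU.isClosed_uInf hU0, hmin.isMinimal_uInf hU hU0 hN, hNufss⟩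

end LocalMinimality

section Covering

variable {G H : Type*} [AddCommGroup G] [AddCommGroup H]

/-- The set `A` is covered by finitely many translates of `V`. -/
def FinCovered (A V : Set G) : Prop :=
  ∃ F : Set G, F.Finite ∧ A ⊆ F + V

namespace FinCovered

variable {A A' B V V' W : Set G}

theorem mono (h : FinCovered A V) (hA : A' ⊆ A) (hV : V ⊆ V') : FinCovered A' V' :=
  let ⟨F, hF, hFV⟩ := h
  ⟨F, hF, hA.trans (hFV.trans (add_subset_add_left hV))⟩

theorem trans_add (h : FinCovered A (B + V)) (h' : FinCovered B W) : FinCovered A (W + V) := by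
  obtain ⟨F, hF, hA⟩ := h
  obtain ⟨E, hE, hB⟩ := h'
  refine ⟨F + E, hF.add hE, ?_⟩
  calc A ⊆ F + (B + V) := hA
    _ ⊆ F + (E + W + V) := by gcongr
    _ = F + E + (W + V) := by simp only [add_assoc]

theorem image (h : FinCovered A V) (f : G →+ H) : FinCovered (f '' A) (f '' V) := by
  obtain ⟨F, hF, hA⟩ := h
  refine ⟨f '' F, hF.image f, ?_⟩
  rw [← image_add]
  exact image_mono hA

theorem preimage {A V : Set H} (h : FinCovered A V) (f : G →+ H) :
    FinCovered (f ⁻¹' A) (f ⁻¹' (V - V)) := by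
  obtain ⟨F, hF, hA⟩ := h
  set E := {e ∈ F | ∃ x, f x - e ∈ V}
  choose! c hc using fun e (he : e ∈ E) => he.2
  refine ⟨c '' E, (hF.subset (sep_subset _ _)).image c, fun x hx => ?_⟩
  obtain ⟨e, he, v, hv, hev⟩ := hA hx
  have hxe : f x - e ∈ V := by rwa [← hev, add_sub_cancel_left]
  have heE : e ∈ E := ⟨he, x, hxe⟩
  refine ⟨c e, mem_image_of_mem c heE, x - c e, ⟨f x - e, hxe, f (c e) - e, hc e heE, ?_⟩, ?_⟩
  · simp
  · simp

theorem closure [TopologicalSpace G] [IsTopologicalAddGroup G] (h : FinCovered A V)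
    (hV : IsClosed V) : FinCovered (closure A) V := by
  obtain ⟨F, hF, hA⟩ := h
  exact ⟨F, hF, closure_minimal hA (hV.add_left_of_isCompact hF.isCompact)⟩

theorem union (hA : FinCovered A V) (hB : FinCovered B V) : FinCovered (A ∪ B) V := by
  obtain ⟨F, hF, hA⟩ := hA
  obtain ⟨E, hE, hB⟩ := hB
  refine ⟨F ∪ E, hF.union hE, ?_⟩
  rw [union_add]
  exact union_subset_union hA hB

end FinCovered

theorem finCovered_of_finite {A V : Set G} (hA : A.Finite) (hV : 0 ∈ V) : FinCovered A V :=
  ⟨A, hA, fun a ha => ⟨a, ha, 0, hV, add_zero a⟩⟩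

theorem totallyBounded_iff_forall_finCovered [UniformSpace G] [IsUniformAddGroup G] {A : Set G} :
    TotallyBounded A ↔ ∀ U ∈ 𝓝 0, FinCovered A U := by
  simp only [totallyBounded_iff_subset_finite_iUnion_nhds_zero, FinCovered, ← iUnion_add_left_image,
    ← image_vadd, vadd_eq_add]

/-- Total boundedness of `A` modulo `B`: up to an arbitrarily small error, `A` lies in finitely many
translates of `B`. -/
def TotallyBoundedMod [TopologicalSpace G] (A B : Set G) : Prop :=
  ∀ W ∈ 𝓝 0, FinCovered A (B + W)

/-- A decreasing sequence of subgroups whose terms are eventually covered by finitely many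
translates of any given neighbourhood of `0`. In a complete group, the intersection is then
compact and the sequence converges to it. -/
structure EventuallyPrecompact [TopologicalSpace G] (D : ℕ → AddSubgroup G) : Prop where
  antitone : Antitone D
  exists_finCovered : ∀ U ∈ 𝓝 0, ∃ k, FinCovered (D k : Set G) U

theorem TotallyBoundedMod.trans [TopologicalSpace G] [IsTopologicalAddGroup G] {A B C : Set G}
    (h : TotallyBoundedMod A B) (h' : TotallyBoundedMod B C) : TotallyBoundedMod A C := by
  intro W hW
  obtain ⟨V, hV, -, -, hVW⟩ := exists_closed_nhds_zero_neg_eq_add_subset hW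
  refine ((h V hV).trans_add (h' V hV)).mono Subset.rfl ?_
  rw [add_assoc]
  exact add_subset_add_left hVW

theorem TotallyBoundedMod.image [TopologicalSpace G] [TopologicalSpace H] {A B : Set G}
    (h : TotallyBoundedMod A B) {f : G →+ H} (hf : Continuous f) :
    TotallyBoundedMod (f '' A) (f '' B) := by
  intro W hW
  have hfW : f ⁻¹' W ∈ 𝓝 0 := hf.continuousAt.preimage_mem_nhds (by rwa [map_zero])
  refine ((h _ hfW).image f).mono Subset.rfl ?_
  rw [image_add]
  exact add_subset_add_left (image_preimage_subset f W)

theorem totallyBoundedMod_of_subset [TopologicalSpace G] {A B : Set G} (hAB : A ⊆ B) :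
    TotallyBoundedMod A B := by
  refine fun W hW => ⟨{0}, finite_singleton 0, fun a ha => ?_⟩
  rw [singleton_zero, zero_add]
  exact ⟨a, hAB ha, 0, mem_of_mem_nhds hW, add_zero a⟩

namespace EventuallyPrecompact

variable [TopologicalSpace G] [TopologicalSpace H] {D : ℕ → AddSubgroup G}

theorem map (hD : EventuallyPrecompact D) {f : G →+ H} (hf : Continuous f) :
    EventuallyPrecompact fun k => (D k).map f where
  antitone _ _ hkl := AddSubgroup.map_mono (hD.antitone hkl)
  exists_finCovered U hU := by
    obtain ⟨k, hk⟩ := hD.exists_finCovered (f ⁻¹' U)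
      (hf.continuousAt.preimage_mem_nhds (by rwa [map_zero]))
    exact ⟨k, (hk.image f).mono Subset.rfl (image_preimage_subset f U)⟩

variable [IsTopologicalAddGroup G]

theorem topologicalClosure (hD : EventuallyPrecompact D) :
    EventuallyPrecompact fun k => (D k).topologicalClosure where
  antitone _ _ hkl := AddSubgroup.topologicalClosure_mono (hD.antitone hkl)
  exists_finCovered U hU := by
    obtain ⟨V, hV, hVclosed, hVU⟩ := exists_mem_nhds_isClosed_subset hU
    obtain ⟨k, hk⟩ := hD.exists_finCovered V hV
    exact ⟨k, (hk.closure hVclosed).mono Subset.rfl hVU⟩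

theorem comap (hD : EventuallyPrecompact D) {f : H →+ G} (hf : IsInducing f) :
    EventuallyPrecompact fun k => (D k).comap f where
  antitone _ _ hkl := AddSubgroup.comap_mono (hD.antitone hkl)
  exists_finCovered U hU := by
    rw [hf.nhds_eq_comap, map_zero] at hU
    obtain ⟨U', hU', hU'U⟩ := hU
    obtain ⟨V, hV, -, hVneg, hVU'⟩ := exists_closed_nhds_zero_neg_eq_add_subset hU'
    obtain ⟨k, hk⟩ := hD.exists_finCovered V hV
    refine ⟨k, (hk.preimage f).mono Subset.rfl (Subset.trans (preimage_mono ?_) hU'U)⟩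
    rwa [sub_eq_add_neg, hVneg]

end EventuallyPrecompact

end Covering

section Circle

theorem exists_coe_eq_abs_eq_norm (t : UnitAddCircle) :
    ∃ r : ℝ, (r : UnitAddCircle) = t ∧ |r| = ‖t‖ := by
  obtain ⟨x, rfl⟩ := QuotientAddGroup.mk_surjective t
  refine ⟨x - round x, ?_, UnitAddCircle.norm_eq.symm⟩
  have hround : ((round x : ℝ) : UnitAddCircle) = 0 :=
    AddCircle.coe_eq_zero_iff 1 |>.2 ⟨round x, by simp⟩
  rw [AddCircle.coe_sub, hround, sub_zero]

theorem eq_of_coe_unitAddCircle_eq {r s : ℝ} (h : (r : UnitAddCircle) = s) (hrs : |r - s| < 1) :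
    r = s := by
  have hsub : ((r - s : ℝ) : UnitAddCircle) = 0 := by rw [AddCircle.coe_sub, h, sub_self]
  obtain ⟨n, hn⟩ := AddCircle.coe_eq_zero_iff 1 |>.1 hsub
  rw [zsmul_one] at hn
  rw [← hn] at hrs
  have hn0 : n = 0 := Int.abs_lt_one_iff.1 (mod_cast hrs)
  rwa [hn0, Int.cast_zero, eq_comm, sub_eq_zero] at hn

theorem norm_coe_unitAddCircle_le (r : ℝ) : ‖(r : UnitAddCircle)‖ ≤ |r| := by
  simpa [UnitAddCircle.norm_eq] using round_le r 0

theorem norm_two_nsmul_unitAddCircle {t : UnitAddCircle} (ht : ‖t‖ ≤ 1 / 4) :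
    ‖2 • t‖ = 2 * ‖t‖ := by
  obtain ⟨r, rfl, hr⟩ := exists_coe_eq_abs_eq_norm t
  rw [← hr] at ht ⊢
  have hdouble : |2 * r| = 2 * |r| := by rw [abs_mul, abs_two]
  rw [two_nsmul, ← AddCircle.coe_add, ← two_mul, ← hdouble,
    AddCircle.norm_coe_eq_abs_iff 1 one_ne_zero, hdouble, abs_one]
  linarith

theorem norm_le_of_forall_norm_two_pow_nsmul_le {t : UnitAddCircle} {N : ℕ}
    (h : ∀ k ≤ N, ‖2 ^ k • t‖ ≤ 1 / 4) : ‖t‖ ≤ 1 / 4 / 2 ^ N := by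
  have hpow : ∀ k ≤ N, ‖2 ^ k • t‖ = 2 ^ k * ‖t‖ := by
    intro k hk
    induction k with
    | zero => simp
    | succ k ih =>
      rw [pow_succ', mul_smul, norm_two_nsmul_unitAddCircle (h k (by lia)), ih (by lia), pow_succ',
        mul_assoc]
  rw [le_div_iff₀ (by positivity), mul_comm, ← hpow N le_rfl]
  exact h N le_rfl

theorem eq_zero_of_forall_norm_two_pow_nsmul_le {t : UnitAddCircle}
    (h : ∀ k : ℕ, ‖2 ^ k • t‖ ≤ 1 / 4) : t = 0 := by
  have hlim : Tendsto (fun N : ℕ => (1 / 4 : ℝ) / 2 ^ N) atTop (𝓝 0) :=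
    tendsto_const_nhds.div_atTop (tendsto_pow_atTop_atTop_of_one_lt one_lt_two)
  have hle := ge_of_tendsto' hlim fun N => norm_le_of_forall_norm_two_pow_nsmul_le fun k _ => h k
  exact norm_le_zero_iff.1 hle

end Circle

section AlmostHomomorphisms

variable {A : Type*} [AddCommGroup A] {ε : ℝ}

theorem exists_bounded_double_eq {d : A → ℝ} (hd : ∀ x, |d x| ≤ ε) :
    ∃ β : A → ℝ, (∀ x, |β x| ≤ ε) ∧ ∀ x, β (x + x) = 2 * β x - d x := by
  let t (x : A) (n : ℕ) : ℝ := d (2 ^ n • x) / 2 / 2 ^ n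
  have ht (x : A) (n : ℕ) : ‖t x n‖ ≤ ε / 2 / 2 ^ n := by
    simp only [t, Real.norm_eq_abs, abs_div, abs_pow, abs_two]
    gcongr
    exact hd _
  have hgeo := hasSum_geometric_two' ε
  have hsum (x : A) : Summable (t x) := .of_norm_bounded hgeo.summable (ht x)
  refine ⟨fun x => ∑' n, t x n, fun x => tsum_of_norm_bounded hgeo (ht x), fun x => ?_⟩
  have hshift (n : ℕ) : t (x + x) n = 2 * t x (n + 1) := by
    have hpow : (2 : ℕ) ^ n • (x + x) = 2 ^ (n + 1) • x := by rw [pow_succ, mul_smul, two_nsmul]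
    simp only [t, hpow, pow_succ (2 : ℝ)]
    ring
  have hzero : t x 0 = d x / 2 := by simp [t]
  simp only [hshift, tsum_mul_left]
  rw [(hsum x).tsum_eq_zero_add, hzero]
  ring

theorem eq_zero_of_bounded_of_double {X : Type*} {φ : X → ℝ} {T : X → X} {C : ℝ}
    (hφ : ∀ x, |φ x| ≤ C) (hT : ∀ x, φ (T x) = 2 * φ x) (x : X) : φ x = 0 := by
  have hiter (n : ℕ) : φ (T^[n] x) = 2 ^ n * φ x := by
    induction n with
    | zero => simp
    | succ n ih => rw [Function.iterate_succ_apply', hT, ih, pow_succ', mul_assoc]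
  by_contra hx
  obtain ⟨n, hn⟩ := pow_unbounded_of_one_lt (C / |φ x|) one_lt_two
  rw [div_lt_iff₀ (abs_pos.2 hx)] at hn
  have hle := hφ (T^[n] x)
  rw [hiter, abs_mul, abs_pow, abs_two] at hle
  linarith

/-- The doubling identity in the hypothesis holds for every symmetric `2`-cocycle. -/
theorem exists_bounded_coboundary {c : A → A → ℝ} (hc : ∀ a b, |c a b| ≤ ε)
    (hdouble : ∀ a b, c a a + c b b + c (a + a) (b + b) = 2 * c a b + c (a + b) (a + b)) :
    ∃ β : A → ℝ, (∀ x, |β x| ≤ ε) ∧ ∀ a b, c a b = β a + β b - β (a + b) := by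
  obtain ⟨β, hβ, hβ2⟩ := exists_bounded_double_eq fun x => hc x x
  refine ⟨β, hβ, fun a b => ?_⟩
  let φ (z : A × A) : ℝ := c z.1 z.2 - (β z.1 + β z.2 - β (z.1 + z.2))
  have hφ (z : A × A) : |φ z| ≤ 4 * ε := by
    have h1 := abs_le.1 (hc z.1 z.2)
    have h2 := abs_le.1 (hβ z.1)
    have h3 := abs_le.1 (hβ z.2)
    have h4 := abs_le.1 (hβ (z.1 + z.2))
    rw [abs_le]
    constructor <;> linarith
  have hφ2 (z : A × A) : φ (z + z) = 2 * φ z := by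
    simp only [φ, Prod.fst_add, Prod.snd_add]
    rw [add_add_add_comm, hβ2, hβ2, hβ2]
    linarith [hdouble z.1 z.2]
  exact sub_eq_zero.1 (eq_zero_of_bounded_of_double hφ hφ2 (a, b))

theorem exists_addMonoidHom_norm_sub_le {f₀ : A → UnitAddCircle} (hε : ε < 1 / 6)
    (h : ∀ a b, ‖f₀ a + f₀ b - f₀ (a + b)‖ ≤ ε) :
    ∃ f : A →+ UnitAddCircle, ∀ a, ‖f a - f₀ a‖ ≤ ε := by
  choose c hc hcnorm using fun a b => exists_coe_eq_abs_eq_norm (f₀ a + f₀ b - f₀ (a + b))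
  have hcε (a b : A) : |c a b| ≤ ε := (hcnorm a b).trans_le (h a b)
  have hdouble (a b : A) :
      c a a + c b b + c (a + a) (b + b) = 2 * c a b + c (a + b) (a + b) := by
    apply eq_of_coe_unitAddCircle_eq
    · simp only [two_mul, AddCircle.coe_add, hc]
      rw [add_add_add_comm a a b b]
      abel
    · have h1 := abs_le.1 (hcε a a)
      have h2 := abs_le.1 (hcε b b)
      have h3 := abs_le.1 (hcε (a + a) (b + b))
      have h4 := abs_le.1 (hcε a b)
      have h5 := abs_le.1 (hcε (a + b) (a + b))
      rw [abs_lt]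
      constructor <;> linarith
  obtain ⟨β, hβ, hcβ⟩ := exists_bounded_coboundary hcε hdouble
  refine ⟨.mk' (fun a => f₀ a - (β a : UnitAddCircle)) fun a b => ?_, fun a => ?_⟩
  · have hdefect := hc a b
    rw [hcβ, AddCircle.coe_sub, AddCircle.coe_add] at hdefect
    rw [← sub_eq_zero]
    rw [← sub_eq_zero] at hdefect
    rw [← hdefect]
    abel
  · rw [AddMonoidHom.mk'_apply, sub_sub_cancel_left, norm_neg]
    exact (norm_coe_unitAddCircle_le _).trans (hβ a)

end AlmostHomomorphisms

section GelfandCharacters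

variable {K : Type*} [AddCommGroup K] [TopologicalSpace K]

theorem exists_addChar_circle_of_commCStarAlgebra {B : Type*} [CommCStarAlgebra B]
    (ρ : AddChar K (unitary B)) {S : B} (hcont : Continuous fun x => (ρ x : B) * S) {x₀ : K}
    (hx₀ : (ρ x₀ : B) * S ≠ S) : ∃ χ : AddChar K Circle, Continuous χ ∧ χ x₀ ≠ 1 := by
  have hne : WeakDual.gelfandTransform ℂ B ((ρ x₀ : B) * S - S) ≠ 0 := fun h =>
    hx₀ (sub_eq_zero.1 ((gelfandTransform_isometry B).injective (h.trans (map_zero _).symm)))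
  obtain ⟨φ, hφ⟩ := DFunLike.ne_iff.1 hne
  have hφne : φ (ρ x₀) * φ S ≠ φ S := by simpa [sub_eq_zero] using hφ
  have hφS : φ S ≠ 0 := fun h => hφne (by rw [h, mul_zero])
  have hnorm (x : K) : φ (ρ x) ∈ Submonoid.unitSphere ℂ := by
    have hmem : φ (ρ x) ∈ unitary ℂ := Unitary.map_mem φ (ρ x).2
    exact mem_sphere_zero_iff_norm.2 (CStarRing.norm_of_mem_unitary hmem)
  have hmul (x y : K) : φ (ρ (x + y)) = φ (ρ x) * φ (ρ y) := by
    rw [AddChar.map_add_eq_mul, Submonoid.coe_mul, map_mul]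
  let χ : AddChar K Circle :=
    { toFun x := ⟨φ (ρ x), hnorm x⟩
      map_zero_eq_one' := Circle.ext (by simp)
      map_add_eq_mul' x y := Circle.ext (hmul x y) }
  refine ⟨χ, Continuous.subtype_mk ?_ hnorm, fun h => hφne ?_⟩
  · have hdiv : (fun x => φ (ρ x)) = fun x => φ (ρ x * S) / φ S :=
      funext fun x => by rw [map_mul, mul_div_cancel_right₀ _ hφS]
    rw [hdiv]
    exact ((map_continuous φ).comp hcont).div_const _
  · have hone : φ (ρ x₀) = 1 := congrArg ((↑) : Circle → ℂ) h
    rw [hone, one_mul]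

variable {A : Type*} [CStarAlgebra A]

theorem exists_addChar_circle_of_isSelfAdjoint (ρ : AddChar K (unitary A)) {S : A}
    (hS : IsSelfAdjoint S) (hcomm : ∀ x, Commute (ρ x : A) S)
    (hcont : Continuous fun x => (ρ x : A) * S) {x₀ : K} (hx₀ : (ρ x₀ : A) * S ≠ S) :
    ∃ χ : AddChar K Circle, Continuous χ ∧ χ x₀ ≠ 1 := by
  let s : Set A := insert S (range fun x => (ρ x : A))
  let B₀ : StarSubalgebra ℂ A := StarAlgebra.adjoin ℂ s
  let B : StarSubalgebra ℂ A := B₀.topologicalClosure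
  have : IsClosed (B : Set A) := B₀.isClosed_topologicalClosure
  have hmul_comm : ∀ a ∈ s, ∀ b ∈ s, a * b = b * a := by
    rintro _ (rfl | ⟨x, rfl⟩) _ (rfl | ⟨y, rfl⟩)
    · rfl
    · exact (hcomm y).symm
    · exact hcomm x
    · simp only [← Submonoid.coe_mul, ← AddChar.map_add_eq_mul, add_comm]
  have hstar : ∀ b ∈ s, star b ∈ s := by
    rintro b (hb | ⟨x, rfl⟩)
    · rw [hb, hS.star_eq]
      exact mem_insert S _
    · exact mem_insert_of_mem _ ⟨-x, by
        simp only [AddChar.map_neg_eq_inv, ← Unitary.star_eq_inv, Unitary.coe_star]⟩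
  have := StarAlgebra.isMulCommutative_adjoin ℂ hmul_comm fun a ha b hb =>
    hmul_comm a ha _ (hstar b hb)
  let : CommRing B := B₀.commRingTopologicalClosure fun x y => mul_comm' x y
  let : CommCStarAlgebra B := { }
  have hsB {a : A} (ha : a ∈ s) : a ∈ B :=
    B₀.le_topologicalClosure (StarAlgebra.subset_adjoin ℂ s ha)
  have hρB (x : K) : (ρ x : A) ∈ B := hsB (mem_insert_of_mem _ (mem_range_self x))
  let ρB : AddChar K (unitary B) :=
    { toFun x := ⟨⟨ρ x, hρB x⟩, Subtype.ext (ρ x).2.1, Subtype.ext (ρ x).2.2⟩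
      map_zero_eq_one' := Subtype.ext (Subtype.ext (by simp))
      map_add_eq_mul' x y := Subtype.ext (Subtype.ext (by simp [AddChar.map_add_eq_mul])) }
  exact exists_addChar_circle_of_commCStarAlgebra ρB (S := ⟨S, hsB (mem_insert _ _)⟩)
    (hcont.subtype_mk _) fun h => hx₀ (congrArg Subtype.val h)

theorem mul_eq_self_of_mul_star_mul_self {u T : A} (hT : Commute u T) (hT' : Commute u (star T))
    (h : u * (star T * T) = star T * T) : u * T = T := by
  have hsub : star T * (u * T - T) = 0 := by
    rw [mul_sub, ← mul_assoc, ← hT'.eq, mul_assoc, h, sub_self]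
  have hfactor : u * T - T = T * (u - 1) := by rw [mul_sub, mul_one, hT.eq]
  have hzero : star (u * T - T) * (u * T - T) = 0 := by
    nth_rewrite 1 [hfactor]
    rw [star_mul, mul_assoc, hsub, mul_zero]
  rwa [CStarRing.star_mul_self_eq_zero_iff, sub_eq_zero] at hzero

theorem exists_addChar_circle_of_commute (ρ : AddChar K (unitary A)) {T : A}
    (hcomm : ∀ x, Commute (ρ x : A) T) (hcont : Continuous fun x => (ρ x : A) * T) {x₀ : K}
    (hx₀ : (ρ x₀ : A) * T ≠ T) : ∃ χ : AddChar K Circle, Continuous χ ∧ χ x₀ ≠ 1 := by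
  have hcomm' (x : K) : Commute (ρ x : A) (star T) := by
    have h := (hcomm (-x)).star_star
    rwa [← Unitary.coe_star, AddChar.map_neg_eq_inv, ← Unitary.star_eq_inv, star_star] at h
  refine exists_addChar_circle_of_isSelfAdjoint ρ (.star_mul_self T)
    (fun x => (hcomm' x).mul_right (hcomm x)) ?_
    (mt (mul_eq_self_of_mul_star_mul_self (hcomm x₀) (hcomm' x₀)) hx₀)
  have hswap (x : K) : (ρ x : A) * (star T * T) = star T * (ρ x * T) := by
    rw [← mul_assoc, (hcomm' x).eq, mul_assoc]
  simp only [hswap]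
  exact continuous_const.mul hcont

end GelfandCharacters

section PeterWeyl

open MeasureTheory ComplexConjugate

/-- The map sending `Φ : C(X, H)` to the operator `g ↦ (x ↦ ⟪Φ x, g⟫)`; it turns the orbit of a
vector under a unitary representation into an operator with values in continuous functions. -/
noncomputable def innerContinuousMap (X H : Type*) [TopologicalSpace X] [CompactSpace X]
    [NormedAddCommGroup H] [InnerProductSpace ℂ H] : C(X, H) →L⋆[ℂ] H →L[ℂ] C(X, ℂ) :=
  LinearMap.mkContinuous₂
    (LinearMap.mk₂'ₛₗ (starRingEnd ℂ) (RingHom.id ℂ)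
      (fun Φ g => ⟨fun x => inner ℂ (Φ x) g, by fun_prop⟩)
      (fun Φ Ψ g => by ext x; simp)
      (fun c Φ g => by ext x; simp [mul_comm])
      (fun Φ g h => by ext x; simp)
      (fun c Φ g => by ext x; simp)) 1 fun Φ g => by
    rw [ContinuousMap.norm_le _ (by positivity), one_mul]
    intro x
    refine (norm_inner_le_norm (Φ x) g).trans ?_
    gcongr
    exact Φ.norm_coe_le_norm x

variable {K : Type*} [AddCommGroup K] [TopologicalSpace K] [IsTopologicalAddGroup K]
  [MeasurableSpace K] [BorelSpace K] (μ : Measure K) [μ.IsAddHaarMeasure]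

/-- The regular representation of `K` on `L²(μ)`, `(translation μ x g) y = g (x + y)`. -/
noncomputable def translation : AddChar K (unitary (Lp ℂ 2 μ →L[ℂ] Lp ℂ 2 μ)) where
  toFun x := Unitary.linearIsometryEquiv.symm
    { toFun := (DomAddAct.mk x +ᵥ ·)
      invFun := (DomAddAct.mk (-x) +ᵥ ·)
      left_inv := neg_vadd_vadd (DomAddAct.mk x)
      right_inv := vadd_neg_vadd (DomAddAct.mk x)
      map_add' := DomAddAct.vadd_Lp_add _
      map_smul' := by rintro c ⟨⟨g⟩, hg⟩; rfl
      norm_map' := DomAddAct.norm_vadd_Lp _ }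
  map_zero_eq_one' := by
    ext1
    ext1 g
    exact zero_vadd Kᵈᵃᵃ g
  map_add_eq_mul' x y := by
    ext1
    ext1 g
    rw [add_comm]
    exact add_vadd (DomAddAct.mk x) (DomAddAct.mk y) g

variable [CompactSpace K]

theorem translation_toLp (x : K) (f : C(K, ℂ)) :
    (translation μ x : Lp ℂ 2 μ →L[ℂ] Lp ℂ 2 μ) (ContinuousMap.toLp 2 μ ℂ f) =
      ContinuousMap.toLp 2 μ ℂ (f.comp ⟨fun y => x + y, by fun_prop⟩) :=
  rfl

theorem continuous_translation_toLp (f : C(K, ℂ)) : Continuous fun x =>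
    (translation μ x : Lp ℂ 2 μ →L[ℂ] Lp ℂ 2 μ) (ContinuousMap.toLp 2 μ ℂ f) := by
  let τ : C(K, C(K, ℂ)) := ContinuousMap.curry ⟨fun p : K × K => f (p.1 + p.2), by fun_prop⟩
  exact (ContinuousMap.toLp 2 μ ℂ).continuous.comp τ.continuous

/-- The operators on `L²(μ)` given by `(translatedKernel μ f z g) x = ⟪f (· - (z + x)), g⟫`. -/
noncomputable def translatedKernel (f : C(K, ℂ)) : C(K, Lp ℂ 2 μ →L[ℂ] Lp ℂ 2 μ) where
  toFun z := ContinuousMap.toLp 2 μ ℂ ∘L innerContinuousMap K (Lp ℂ 2 μ)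
    (ContinuousMap.curry ⟨fun p : K × K => (translation μ (-(p.1 + p.2)) :
      Lp ℂ 2 μ →L[ℂ] Lp ℂ 2 μ) (ContinuousMap.toLp 2 μ ℂ f),
      (continuous_translation_toLp μ f).comp (by fun_prop)⟩ z)
  continuous_toFun := by fun_prop

variable (f : C(K, ℂ)) (z : K)

theorem translation_mul_translatedKernel_zero :
    (translation μ z : Lp ℂ 2 μ →L[ℂ] Lp ℂ 2 μ) * translatedKernel μ f 0 =
      translatedKernel μ f z := by
  ext1 g
  refine (translation_toLp μ z _).trans (congrArg (ContinuousMap.toLp 2 μ ℂ) ?_)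
  ext x
  simp [innerContinuousMap]

theorem translatedKernel_zero_mul_translation :
    translatedKernel μ f 0 * (translation μ z : Lp ℂ 2 μ →L[ℂ] Lp ℂ 2 μ) =
      translatedKernel μ f z := by
  ext1 g
  refine congrArg (ContinuousMap.toLp 2 μ ℂ) ?_
  ext x
  set v : Lp ℂ 2 μ := ContinuousMap.toLp 2 μ ℂ f
  have hshift : translation μ (-(0 + x)) = translation μ z * translation μ (-(z + x)) := by
    rw [← AddChar.map_add_eq_mul]
    congr 1
    abel
  change inner ℂ ((translation μ (-(0 + x)) : Lp ℂ 2 μ →L[ℂ] Lp ℂ 2 μ) v) _ = _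
  rw [hshift]
  exact Unitary.inner_map_map (translation μ z) _ g

theorem translation_toLp_eq_self_of_translatedKernel_eq {x₀ : K}
    (h : translatedKernel μ f x₀ = translatedKernel μ f 0) :
    (translation μ (-x₀) : Lp ℂ 2 μ →L[ℂ] Lp ℂ 2 μ) (ContinuousMap.toLp 2 μ ℂ f) =
      ContinuousMap.toLp 2 μ ℂ f := by
  set v : Lp ℂ 2 μ := ContinuousMap.toLp 2 μ ℂ f
  have hfun := ContinuousMap.toLp_injective μ (DFunLike.congr_fun h v)
  have hinner : inner ℂ ((translation μ (-x₀) : Lp ℂ 2 μ →L[ℂ] Lp ℂ 2 μ) v) v = inner ℂ v v := by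
    simpa [innerContinuousMap, -inner_self_eq_norm_sq_to_K] using DFunLike.congr_fun hfun 0
  apply eq_of_norm_le_re_inner_eq_norm_sq (𝕜 := ℂ)
  · exact (Unitary.norm_map (translation μ (-x₀)) v).le
  · rw [hinner, inner_self_eq_norm_sq]

theorem exists_addChar_circle_of_apply_ne {K : Type*} [AddCommGroup K]
    [TopologicalSpace K] [IsTopologicalAddGroup K] [CompactSpace K] {f : C(K, ℂ)} {x₀ : K}
    (hf : f x₀ ≠ f 0) : ∃ χ : AddChar K Circle, Continuous χ ∧ χ x₀ ≠ 1 := by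
  borelize K
  let μ : Measure K := Measure.addHaar
  refine exists_addChar_circle_of_commute (translation μ) (T := translatedKernel μ f 0)
    (fun z => ?_) ?_ fun h => hf ?_
  · rw [Commute, SemiconjBy, translation_mul_translatedKernel_zero,
      translatedKernel_zero_mul_translation]
  · simpa only [translation_mul_translatedKernel_zero] using map_continuous _
  · rw [translation_mul_translatedKernel_zero] at h
    have hv := translation_toLp_eq_self_of_translatedKernel_eq μ f h
    rw [translation_toLp] at hv
    simpa using (DFunLike.congr_fun (ContinuousMap.toLp_injective μ hv) x₀).symm

theorem exists_continuous_addMonoidHom_unitAddCircle_ne_zero {K : Type*} [AddCommGroup K]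
    [TopologicalSpace K] [IsTopologicalAddGroup K] [CompactSpace K] [T2Space K] {x₀ : K}
    (hx₀ : x₀ ≠ 0) : ∃ χ : K →+ UnitAddCircle, Continuous χ ∧ χ x₀ ≠ 0 := by
  obtain ⟨f, hf0, hf1, -⟩ := exists_continuous_zero_one_of_isClosed (isClosed_singleton (x := 0))
    (isClosed_singleton (x := x₀)) (by simpa using hx₀.symm)
  have hf : (f x₀ : ℂ) ≠ f 0 := by
    rw [hf0 rfl, hf1 rfl]
    simp
  obtain ⟨χ, hχ, hχx₀⟩ :=
    exists_addChar_circle_of_apply_ne (f := ⟨fun x => (f x : ℂ), by fun_prop⟩) hf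
  let e := AddCircle.homeomorphCircle (T := 1) one_ne_zero
  have hadd (s t : UnitAddCircle) : e (s + t) = e s * e t := by
    simp only [e, AddCircle.homeomorphCircle_apply, AddCircle.toCircle_add]
  refine ⟨.mk' (fun x => e.symm (χ x)) fun x y => ?_, e.symm.continuous.comp hχ, fun h => hχx₀ ?_⟩
  · apply e.injective
    simp only [hadd, e.apply_symm_apply, AddChar.map_add_eq_mul]
  · rw [← e.apply_symm_apply (χ x₀)]
    refine (congrArg e h).trans ?_
    rw [AddCircle.homeomorphCircle_apply, AddCircle.toCircle_zero]

end PeterWeyl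

section CharacterExtension

variable {X : Type*} [AddCommGroup X]

theorem exists_addMonoidHom_unitAddCircle_extending {D : AddSubgroup X} (f : D →+ UnitAddCircle) :
    ∃ g : X →+ UnitAddCircle, ∀ d : D, g d = f d := by
  obtain ⟨g, hg⟩ := (Module.Baer.of_divisible UnitAddCircle).extension_property_addMonoidHom
    D.subtype D.subtype_injective f
  exact ⟨g, DFunLike.congr_fun hg⟩

/-- The inclusion `ℚ/ℤ → ℝ/ℤ`. -/
noncomputable def ratToUnitAddCircle : AddCircle (1 : ℚ) →+ UnitAddCircle :=
  QuotientAddGroup.map _ _ (Rat.castHom ℝ).toAddMonoidHom (by rintro _ ⟨n, rfl⟩; exact ⟨n, by simp⟩)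

theorem ratToUnitAddCircle_injective : Function.Injective ratToUnitAddCircle := by
  refine (injective_iff_map_eq_zero _).2 fun a => ?_
  induction a using QuotientAddGroup.induction_on with | H q =>
  intro hq
  obtain ⟨n, hn⟩ := (AddCircle.coe_eq_zero_iff (1 : ℝ)).1 hq
  refine (AddCircle.coe_eq_zero_iff (1 : ℚ)).2 ⟨n, Rat.cast_injective (α := ℝ) ?_⟩
  simpa using hn

theorem exists_addMonoidHom_unitAddCircle_ne_zero {x : X} (hx : x ≠ 0) :
    ∃ g : X →+ UnitAddCircle, g x ≠ 0 := by
  obtain ⟨c, hc⟩ := CharacterModule.exists_character_apply_ne_zero_of_ne_zero hx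
  exact ⟨ratToUnitAddCircle.comp c, (map_ne_zero_iff _ ratToUnitAddCircle_injective).2 hc⟩

theorem addMonoidHom_unitAddCircle_eq_zero {f : X →+ UnitAddCircle} (h : ∀ x, ‖f x‖ ≤ 1 / 4) :
    f = 0 := by
  ext x
  refine eq_zero_of_forall_norm_two_pow_nsmul_le fun k => ?_
  rw [← map_nsmul]
  exact h _

theorem continuous_unitAddCircle_of_norm_le [TopologicalSpace X] [IsTopologicalAddGroup X]
    {g : X →+ UnitAddCircle} {V : Set X} (hV : V ∈ 𝓝 0) (h : ∀ x ∈ V, ‖g x‖ ≤ 1 / 4) :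
    Continuous g := by
  refine continuous_of_continuousAt_zero g ?_
  rw [ContinuousAt, map_zero, Metric.tendsto_nhds]
  intro ε hε
  obtain ⟨N, hN⟩ := pow_unbounded_of_one_lt (1 / ε) one_lt_two
  filter_upwards [invDiv_mem_nhds_zero hV (2 ^ N)] with x hx
  have hgx : ‖g x‖ ≤ 1 / 4 / 2 ^ N := by
    refine norm_le_of_forall_norm_two_pow_nsmul_le fun k hk => ?_
    rw [← map_nsmul]
    exact h _ (hx _ Nat.one_le_two_pow (Nat.pow_le_pow_right two_pos hk))
  rw [dist_zero_right]
  refine hgx.trans_lt ?_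
  rw [div_lt_iff₀ hε] at hN
  rw [div_lt_iff₀ (by positivity)]
  linarith

theorem exists_continuous_addMonoidHom_unitAddCircle_ne_zero_of_notMem [TopologicalSpace X]
    [IsTopologicalAddGroup X] {D : AddSubgroup X} (hD : IsOpen (D : Set X)) {x : X} (hx : x ∉ D) :
    ∃ f : X →+ UnitAddCircle, Continuous f ∧ f x ≠ 0 := by
  obtain ⟨g, hg⟩ := exists_addMonoidHom_unitAddCircle_ne_zero
    (mt (QuotientAddGroup.eq_zero_iff (N := D) x).1 hx)
  refine ⟨g.comp (QuotientAddGroup.mk' D),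
    continuous_unitAddCircle_of_norm_le (hD.mem_nhds D.zero_mem) fun y hy => ?_, hg⟩
  have hy0 : (y : X ⧸ D) = 0 := (QuotientAddGroup.eq_zero_iff y).2 hy
  simp [hy0]

/-- Approximating `d ∈ D` by elements of `M` turns `χ` into an almost homomorphism on `D`. -/
theorem exists_addMonoidHom_unitAddCircle_extending_of_subset_add {M D : AddSubgroup X}
    {U : Set X} (hMD : M ≤ D) (hU0 : 0 ∈ U) (hUneg : -U = U) (hDU : (D : Set X) ⊆ M + U)
    {χ : M →+ UnitAddCircle} (hχ : ∀ m : M, (m : X) ∈ U + U + U → ‖χ m‖ ≤ 1 / 20) :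
    ∃ f : X →+ UnitAddCircle, (∀ m : M, f m = χ m) ∧ ∀ d ∈ (D : Set X) ∩ U, ‖f d‖ ≤ 1 / 4 := by
  have hneg : ∀ {u}, u ∈ U → -u ∈ U := fun {u} hu => by rwa [← hUneg, Set.neg_mem_neg]
  have happrox : ∀ d : D, ∃ m : M, (d - m : X) ∈ U := fun d =>
    let ⟨m, hm, u, hu, hmu⟩ := hDU d.2
    ⟨⟨m, hm⟩, by simpa [← hmu] using hu⟩
  choose m hm using happrox
  have hm' : ∀ d, (m d - d : X) ∈ U := fun d => by simpa using hneg (hm d)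
  obtain ⟨f₀, hf₀⟩ := exists_addMonoidHom_norm_sub_le (f₀ := fun d => χ (m d))
    (ε := 1 / 20) (by norm_num) fun a b => by
      rw [← map_add, ← map_sub]
      refine hχ _ ⟨_, ⟨_, hm' a, _, hm' b, rfl⟩, _, hm (a + b), ?_⟩
      push_cast
      abel
  have hf₀χ : f₀.comp (AddSubgroup.inclusion hMD) - χ = 0 := by
    refine addMonoidHom_unitAddCircle_eq_zero fun y => ?_
    let d := AddSubgroup.inclusion hMD y
    have hχy : ‖χ (m d) - χ y‖ ≤ 1 / 20 := by
      rw [← map_sub]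
      exact hχ _ ⟨_, ⟨_, hm' d, 0, hU0, rfl⟩, 0, hU0, by simp [d]⟩
    calc ‖f₀ d - χ y‖ ≤ ‖f₀ d - χ (m d)‖ + ‖χ (m d) - χ y‖ := norm_sub_le_norm_sub_add_norm_sub ..
      _ ≤ 1 / 4 := by linarith [hf₀ d]
  obtain ⟨f, hf⟩ := exists_addMonoidHom_unitAddCircle_extending f₀
  refine ⟨f, fun y => ?_, ?_⟩
  · exact (hf (AddSubgroup.inclusion hMD y)).trans (sub_eq_zero.1 (DFunLike.congr_fun hf₀χ y))
  · rintro d ⟨hd, hdU⟩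
    lift d to D using hd
    have hχd : ‖χ (m d)‖ ≤ 1 / 20 := hχ _ ⟨_, ⟨_, hm' d, d, hdU, rfl⟩, 0, hU0, by simp⟩
    rw [hf]
    linarith [norm_le_norm_sub_add (f₀ d) (χ (m d)), hf₀ d]

end CharacterExtension

section OpenSubgroups

variable {X : Type*} [AddCommGroup X]

namespace EventuallyPrecompact

section Complete

variable [UniformSpace X] [IsUniformAddGroup X] [CompleteSpace X] {D : ℕ → AddSubgroup X}

theorem isCompact_iInf (hD : EventuallyPrecompact D) (hclosed : ∀ k, IsClosed (D k : Set X)) :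
    IsCompact ((⨅ k, D k : AddSubgroup X) : Set X) := by
  refine TotallyBounded.isCompact_of_isClosed (totallyBounded_iff_forall_finCovered.2
    fun U hU => ?_) ?_
  · obtain ⟨k, hk⟩ := hD.exists_finCovered U hU
    exact hk.mono (iInf_le D k) Subset.rfl
  · rw [AddSubgroup.coe_iInf]
    exact isClosed_iInter hclosed

theorem exists_mapClusterPt (hD : EventuallyPrecompact D) {d : ℕ → X} (hd : ∀ k, d k ∈ D k) :
    ∃ m, MapClusterPt m atTop d := by
  have htb : TotallyBounded (range d) := by
    refine totallyBounded_iff_forall_finCovered.2 fun W hW => ?_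
    obtain ⟨k, hk⟩ := hD.exists_finCovered W hW
    refine (hk.union (finCovered_of_finite ((finite_Iio k).image d) (mem_of_mem_nhds hW))).mono ?_
      Subset.rfl
    rintro _ ⟨n, rfl⟩
    exact (le_or_gt k n).imp (fun hn => hD.antitone hn (hd n)) (mem_image_of_mem d)
  obtain ⟨m, -, hm⟩ := (htb.closure.isCompact_of_isClosed isClosed_closure).exists_mapClusterPt
    (f := atTop) (u := d) (tendsto_principal.2 (.of_forall fun n => subset_closure ⟨n, rfl⟩))
  exact ⟨m, hm⟩

theorem exists_subset_iInf_add (hD : EventuallyPrecompact D)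
    (hclosed : ∀ k, IsClosed (D k : Set X)) {U : Set X} (hU : U ∈ 𝓝 0) :
    ∃ k, (D k : Set X) ⊆ (⨅ k, D k : AddSubgroup X) + U := by
  by_contra! hcon
  choose d hd hdU using fun k => not_subset.1 (hcon k)
  obtain ⟨m, hm⟩ := hD.exists_mapClusterPt hd
  have hmD : m ∈ ⨅ k, D k := AddSubgroup.mem_iInf.2 fun k =>
    (hclosed k).mem_of_mapClusterPt hm (eventually_atTop.2 ⟨k, fun n hn => hD.antitone hn (hd n)⟩)
  have hmU : {y | y - m ∈ U} ∈ 𝓝 m :=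
    (continuous_sub_right m).continuousAt.preimage_mem_nhds (by rwa [sub_self])
  obtain ⟨n, hn⟩ := (hm.frequently hmU).exists
  exact hdU n ⟨m, hmD, d n - m, hn, add_sub_cancel m (d n)⟩

theorem exists_continuous_ne_zero_of_completeSpace [T2Space X] (hD : EventuallyPrecompact D)
    (hopen : ∀ k, IsOpen (D k : Set X)) {x : X} (hx : x ≠ 0) :
    ∃ f : X →+ UnitAddCircle, Continuous f ∧ f x ≠ 0 := by
  by_cases! hxD : ∃ k, x ∉ D k
  · obtain ⟨k, hk⟩ := hxD
    exact exists_continuous_addMonoidHom_unitAddCircle_ne_zero_of_notMem (hopen k) hk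
  have hclosed := fun k => (D k).isClosed_of_isOpen (hopen k)
  set M : AddSubgroup X := ⨅ k, D k
  have : CompactSpace M := isCompact_iff_compactSpace.1 (hD.isCompact_iInf hclosed)
  obtain ⟨χ, hχ, hχx⟩ := exists_continuous_addMonoidHom_unitAddCircle_ne_zero
    (K := M) (x₀ := ⟨x, AddSubgroup.mem_iInf.2 hxD⟩) (by simpa [Subtype.ext_iff] using hx)
  have hχ0 : χ ⁻¹' Metric.closedBall 0 (1 / 20) ∈ 𝓝 0 := hχ.continuousAt.preimage_mem_nhds
    (by rw [map_zero]; exact Metric.closedBall_mem_nhds _ (by norm_num))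
  obtain ⟨U₁, hU₁, hU₁χ⟩ := mem_nhds_subtype _ _ _ |>.1 hχ0
  obtain ⟨U₂, hU₂, -, -, hU₂U₁⟩ := exists_closed_nhds_zero_neg_eq_add_subset hU₁
  obtain ⟨U, hU, -, hUneg, hUU₂⟩ := exists_closed_nhds_zero_neg_eq_add_subset hU₂
  have hUU : U + U + U ⊆ U₁ := (add_subset_add hUU₂ ((subset_add_left U
    (mem_of_mem_nhds hU)).trans hUU₂)).trans hU₂U₁
  obtain ⟨k, hk⟩ := hD.exists_subset_iInf_add hclosed hU
  obtain ⟨f, hfχ, hfU⟩ := exists_addMonoidHom_unitAddCircle_extending_of_subset_add (iInf_le D k)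
    (mem_of_mem_nhds hU) hUneg hk (χ := χ)
    fun m hm => by simpa using hU₁χ (show m ∈ Subtype.val ⁻¹' U₁ from hUU hm)
  refine ⟨f, continuous_unitAddCircle_of_norm_le
    (inter_mem ((hopen k).mem_nhds (D k).zero_mem) hU) hfU, ?_⟩
  exact (hfχ ⟨x, _⟩).trans_ne hχx

end Complete

variable [TopologicalSpace X] [IsTopologicalAddGroup X] {D : ℕ → AddSubgroup X}

theorem exists_continuous_ne_zero [T2Space X] (hD : EventuallyPrecompact D)
    (hopen : ∀ k, IsOpen (D k : Set X)) {x : X} (hx : x ≠ 0) :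
    ∃ f : X →+ UnitAddCircle, Continuous f ∧ f x ≠ 0 := by
  let : UniformSpace X := IsTopologicalAddGroup.rightUniformSpace X
  have : IsUniformAddGroup X := isUniformAddGroup_of_addCommGroup
  let i : X →+ UniformSpace.Completion X := UniformSpace.Completion.toCompl
  have hi : Continuous i := UniformSpace.Completion.continuous_toCompl
  have hiopen : ∀ k, IsOpen (((D k).map i).topologicalClosure : Set (UniformSpace.Completion X)) :=
    fun k => AddSubgroup.isOpen_of_mem_nhds _ (g := 0) <|
      UniformSpace.Completion.isDenseInducing_coe.closure_image_mem_nhds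
        ((hopen k).mem_nhds (D k).zero_mem)
  obtain ⟨f, hf, hfx⟩ := (hD.map hi).topologicalClosure.exists_continuous_ne_zero_of_completeSpace
    hiopen (x := i x) (by simpa [i] using hx)
  exact ⟨f.comp i, hf.comp hi, hfx⟩

end EventuallyPrecompact

/-- The evaluation map into the power of the circle indexed by the continuous characters. -/
def evalCharacters (X : Type*) [AddCommGroup X] [TopologicalSpace X] :
    X →+ ({f : X →+ UnitAddCircle // Continuous f} → UnitAddCircle) where
  toFun x f := f.1 x
  map_zero' := by ext f; exact map_zero f.1
  map_add' x y := by ext f; exact map_add f.1 x y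

variable [TopologicalSpace X]

theorem IsMinimal.isInducing_evalCharacters (hmin : IsMinimal X)
    (hsep : ∀ x : X, x ≠ 0 → ∃ f : X →+ UnitAddCircle, Continuous f ∧ f x ≠ 0) :
    IsInducing (evalCharacters X) := by
  have hinj : Function.Injective (evalCharacters X) := by
    refine (injective_iff_map_eq_zero _).2 fun x hx => ?_
    by_contra hx0
    obtain ⟨f, hf, hfx⟩ := hsep x hx0
    exact hfx (congrFun hx ⟨f, hf⟩)
  refine ⟨(hmin _ (continuous_pi fun f => f.2).le_induced
    (topologicalAddGroup_induced (evalCharacters X)) ?_).symm⟩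
  exact @T2Space.of_injective_continuous _ _ (.induced _ _) _ _ _ hinj continuous_induced_dom

theorem finCovered_univ_of_isInducing {H : Type*} [AddCommGroup H] [TopologicalSpace H]
    [IsTopologicalAddGroup H] [CompactSpace H] {f : X →+ H} (hf : IsInducing f) {V : Set X}
    (hV : V ∈ 𝓝 0) : FinCovered univ V := by
  let : UniformSpace H := IsTopologicalAddGroup.rightUniformSpace H
  have : IsUniformAddGroup H := isUniformAddGroup_of_addCommGroup
  rw [hf.nhds_eq_comap, map_zero] at hV
  obtain ⟨O, hO, hOV⟩ := hV
  obtain ⟨P, hP, -, hPneg, hPO⟩ := exists_closed_nhds_zero_neg_eq_add_subset hO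
  have hcov := totallyBounded_iff_forall_finCovered.1 (isCompact_univ (X := H)).totallyBounded P hP
  refine (hcov.preimage f).mono (subset_univ _) (Subset.trans (preimage_mono ?_) hOV)
  rwa [sub_eq_add_neg, hPneg]

variable [IsTopologicalAddGroup X]

theorem IsMinimal.finCovered_univ_of_isOpen [T2Space X] (hmin : IsMinimal X)
    {D : ℕ → AddSubgroup X} (hD : EventuallyPrecompact D) (hopen : ∀ k, IsOpen (D k : Set X))
    {V : Set X} (hV : V ∈ 𝓝 0) : FinCovered univ V :=
  finCovered_univ_of_isInducing
    (hmin.isInducing_evalCharacters fun _ => hD.exists_continuous_ne_zero hopen) hV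

theorem isOpen_comap_topologicalClosure {S D : AddSubgroup X}
    (h : ∃ O ∈ 𝓝 0, ↑S ∩ O ⊆ (D : Set X)) :
    IsOpen ((D.topologicalClosure.comap S.topologicalClosure.subtype :
      AddSubgroup S.topologicalClosure) : Set S.topologicalClosure) := by
  obtain ⟨O, hO, hOD⟩ := h
  refine AddSubgroup.isOpen_of_mem_nhds _ (g := 0) ((mem_nhds_subtype _ _ _).2
    ⟨interior O, interior_mem_nhds.2 hO, ?_⟩)
  rintro ⟨y, hy⟩ hyO
  exact closure_mono (fun s hs => hOD ⟨hs.2, interior_subset hs.1⟩)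
    (isOpen_interior.inter_closure ⟨hyO, hy⟩)

theorem IsMinimal.finCovered_addSubgroup [T2Space X] (hmin : IsMinimal X) {S : AddSubgroup X}
    {D : ℕ → AddSubgroup X} (hD : EventuallyPrecompact D)
    (hopen : ∀ k, ∃ O ∈ 𝓝 0, ↑S ∩ O ⊆ (D k : Set X)) {V : Set X} (hV : V ∈ 𝓝 0) :
    FinCovered (S : Set X) V := by
  let N := S.topologicalClosure
  have hN : IsMinimal N := (isMinimal_iff_locallyMinimalAt_univ.1 hmin).isMinimal_of_add_mem
    S.isClosed_topologicalClosure univ_mem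
  have hcov := hN.finCovered_univ_of_isOpen (hD.topologicalClosure.comap IsInducing.subtypeVal)
    (fun k => isOpen_comap_topologicalClosure (hopen k))
    (continuous_subtype_val.continuousAt.preimage_mem_nhds hV : (↑) ⁻¹' V ∈ 𝓝 (0 : N))
  refine (hcov.image N.subtype).mono ?_ (image_preimage_subset _ V)
  rw [image_univ, AddSubgroup.coe_subtype, Subtype.range_coe]
  exact S.le_topologicalClosure

end OpenSubgroups

section Avoidance

variable {G H : Type*} [AddCommGroup G] [AddCommGroup H]

theorem exists_notMem_add_of_not_finCovered {ι : Type*} (T : Finset ι) {Y : ι → Set G}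
    (hY : ∀ s ∈ T, ¬ FinCovered univ (Y s - Y s)) {E : ι → Set G} (hE : ∀ s ∈ T, (E s).Finite) :
    ∃ x, ∀ s ∈ T, x ∉ E s + Y s := by
  classical
  induction T using Finset.induction_on generalizing E with
  | empty => exact ⟨0, by simp⟩
  | insert r T _ ih =>
    simp only [Finset.forall_mem_insert] at hY hE ⊢
    obtain ⟨x₀, -, hx₀⟩ := not_subset.1 fun h => hY.1 ⟨E r, hE.1, h⟩
    by_contra! hcover
    -- If the translates `E s + Y s` cover the group, those with `s ≠ r` cover `x₀ + Y r` after
    -- translation, so `Y r` can be dispensed with.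
    obtain ⟨x, hx⟩ := ih hY.2 (E := fun s => E s ∪ ((E r - {x₀}) + E s)) fun s hs =>
      (hE.2 s hs).union ((hE.1.sub (finite_singleton x₀)).add (hE.2 s hs))
    simp only [union_add, mem_union, not_or] at hx
    have hxr : x ∈ E r + Y r := by
      by_contra hxr
      obtain ⟨s, hs, hxs⟩ := hcover x hxr
      exact (hx s hs).1 hxs
    obtain ⟨e, he, y, hy, rfl⟩ := hxr
    by_cases hxy : x₀ + y ∈ E r + Y r
    · obtain ⟨e', he', y', hy', h⟩ := hxy
      refine hx₀ ⟨e', he', y' - y, sub_mem_sub hy' hy, ?_⟩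
      simp only at h ⊢
      rw [← add_sub_assoc, h, add_sub_cancel_right]
    · obtain ⟨s, hs, e', he', y', hy', h⟩ := hcover _ hxy
      refine (hx s hs).2 ⟨e - x₀ + e', add_mem_add (sub_mem_sub he rfl) he', y', hy', ?_⟩
      simp only at h ⊢
      rw [add_assoc, h]
      abel

theorem exists_map_notMem_add_of_not_finCovered {ι : Type*} (T : Finset ι) {f : ι → G →+ H}
    {Y : ι → Set H} (hY : ∀ s ∈ T, ¬ FinCovered (range (f s)) (Y s - Y s - (Y s - Y s)))
    {E : ι → Set H} (hE : ∀ s ∈ T, (E s).Finite) : ∃ x, ∀ s ∈ T, f s x ∉ E s + Y s := by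
  have hpre : ∀ s ∈ T, FinCovered (f s ⁻¹' (E s + Y s)) (f s ⁻¹' (Y s - Y s)) := fun s hs =>
    FinCovered.preimage ⟨E s, hE s hs, Subset.rfl⟩ (f s)
  have hY' : ∀ s ∈ T, ¬ FinCovered univ (f s ⁻¹' (Y s - Y s) - f s ⁻¹' (Y s - Y s)) := by
    intro s hs h
    refine hY s hs ((h.image (f s)).mono image_univ.ge ?_)
    rw [image_sub]
    exact sub_subset_sub (image_preimage_subset _ _) (image_preimage_subset _ _)
  choose! E' hE' hEE' using hpre
  obtain ⟨x, hx⟩ := exists_notMem_add_of_not_finCovered T hY' hE'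
  exact ⟨x, fun s hs hxs => hx s hs (hEE' s hs hxs)⟩

theorem exists_seq_forall_fin {α : Type*} {P : ∀ n, (Fin n → α) → α → Prop}
    (h : ∀ n f, ∃ a, P n f a) : ∃ x : ℕ → α, ∀ n, P n (fun i => x i) (x n) := by
  choose g hg using h
  let x : ℕ → α := fun n => n.strongRec fun n ih => g n fun i => ih i i.2
  have hx : ∀ n, x n = g n fun i => x i := fun n => Nat.strongRec_eq _ n
  refine ⟨x, fun n => ?_⟩
  rw [hx n]
  exact hg n _

theorem linearCombination_eq_sum_fin {R M : Type*} [Semiring R] [AddCommMonoid M] [Module R M]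
    {x : ℕ → M} {c : ℕ →₀ R} {n : ℕ} (hc : ∀ i, n ≤ i → c i = 0) :
    Finsupp.linearCombination R x c = ∑ i : Fin n, c i • x i := by
  rw [Finsupp.linearCombination_apply, Finsupp.sum_of_support_subset c (s := Finset.range n),
    Finset.sum_range]
  · intro i hi
    by_contra hin
    exact Finsupp.mem_support_iff.1 hi (hc i (by simpa using hin))
  · exact fun i _ => zero_smul R (x i)

/-- The subgroup `mG` of `m`-th multiples in `G`. -/
def zmultiplesOf (G : Type*) [AddCommGroup G] (m : ℤ) : AddSubgroup G :=
  (zsmulAddGroupHom m).range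

theorem exists_seq_linearCombination_notMem (Y : ℕ → Set G) (K : ℕ → ℤ) :
    ∃ x : ℕ → G, ∀ (n : ℕ) (c : ℕ →₀ ℤ), (∀ i, n < i → c i = 0) → (∀ i, |c i| ≤ K n) →
      ∀ j ≤ n, ¬ FinCovered (zmultiplesOf G (c n) : Set G) (Y j - Y j - (Y j - Y j)) →
        Finsupp.linearCombination ℤ x c ∉ Y j := by
  classical
  let head (n : ℕ) (f : Fin n → G) (c : Fin n → ℤ) : G := ∑ i, c i • f i
  have hstep : ∀ (n : ℕ) (f : Fin n → G), ∃ a : G, ∀ s ∈ Icc (-K n) (K n) ×ˢ Iic n,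
      ¬ FinCovered (zmultiplesOf G s.1 : Set G) (Y s.2 - Y s.2 - (Y s.2 - Y s.2)) →
        s.1 • a ∉ head n f '' {c | ∀ i, |c i| ≤ K n} + Y s.2 := by
    intro n f
    have hfin : (head n f '' {c | ∀ i, |c i| ≤ K n}).Finite := by
      refine ((finite_Icc (fun _ => -K n) (fun _ => K n)).subset fun c hc => ?_).image _
      exact ⟨fun i => (abs_le.1 (hc i)).1, fun i => (abs_le.1 (hc i)).2⟩
    obtain ⟨a, ha⟩ := exists_map_notMem_add_of_not_finCovered
      ((Finset.Icc (-K n) (K n) ×ˢ Finset.Iic n).filter fun s : ℤ × ℕ =>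
        ¬ FinCovered (zmultiplesOf G s.1 : Set G) (Y s.2 - Y s.2 - (Y s.2 - Y s.2)))
      (f := fun s => (zsmulAddGroupHom s.1 : G →+ G)) (Y := fun s => Y s.2)
      (fun s hs => (Finset.mem_filter.1 hs).2)
      (E := fun _ => head n f '' {c | ∀ i, |c i| ≤ K n}) fun _ _ => hfin
    exact ⟨a, fun s hs hcov => ha s (by simp_all)⟩
  obtain ⟨x, hx⟩ := exists_seq_forall_fin hstep
  refine ⟨x, fun n c hc hcK j hj hcov hmem => ?_⟩
  refine hx n (c n, j) ⟨abs_le.1 (hcK n), hj⟩ hcov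
    ⟨_, ⟨fun i => -c i, fun i => by simpa using hcK i, rfl⟩, _, hmem, ?_⟩
  rw [linearCombination_eq_sum_fin hc, Fin.sum_univ_castSucc]
  simp [head]

end Avoidance

section GroupFilterEmbedding

variable {A G : Type*} [AddCommGroup A] [AddCommGroup G] [TopologicalSpace G]
  [IsTopologicalAddGroup G] {𝓕 : Filter A} {φ : A →+ G} {W : Set G} {C : Set A}

theorem compl_singleton_mem_nhds_zero_add_map [T1Space G] (hF : IsGroupFilter 𝓕)
    (hsep : ∀ a ≠ 0, {a}ᶜ ∈ 𝓕) (hW : W ∈ 𝓝 0) (hC : C ∈ 𝓕) (hCW : ∀ a ∈ C, φ a ∈ W → a = 0)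
    {y : G} (hy : y ≠ 0) : {y}ᶜ ∈ 𝓝 0 + 𝓕.map φ := by
  obtain ⟨V, hV, -, hVneg, hVW⟩ := exists_closed_nhds_zero_neg_eq_add_subset hW
  obtain ⟨C', hC', hCC'⟩ : ∃ C' ∈ 𝓕, C' - C' ⊆ C := by
    have hle : 𝓕 - 𝓕 ≤ 𝓕 := by
      rw [sub_eq_add_neg]
      exact (add_le_add_right hF.neg_le 𝓕).trans hF.add_le
    obtain ⟨C₁, hC₁, C₂, hC₂, h⟩ := Filter.mem_sub.1 (hle hC)
    exact ⟨C₁ ∩ C₂, inter_mem hC₁ hC₂,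
      (sub_subset_sub inter_subset_left inter_subset_right).trans h⟩
  have hunique : ∀ a ∈ C', ∀ v ∈ V, ∀ b ∈ C', ∀ w ∈ V, v + φ a = w + φ b → a = b := by
    intro a ha v hv b hb w hw hab
    refine sub_eq_zero.1 (hCW _ (hCC' (sub_mem_sub ha hb)) (hVW ⟨w, hw, -v, ?_, ?_⟩))
    · rwa [← hVneg, Set.neg_mem_neg]
    · simp only [map_sub]
      rw [← sub_eq_add_neg, sub_eq_sub_iff_add_eq_add, ← hab, add_comm]
  by_cases hyV : y ∈ V + φ '' C'
  · obtain ⟨v, hv, _, ⟨a, ha, rfl⟩, rfl⟩ := hyV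
    have ha' : {b | b = a → a = 0} ∈ 𝓕 := by
      rcases eq_or_ne a 0 with rfl | ha0
      · simp
      · filter_upwards [hsep a ha0] with b hb hba using absurd hba hb
    refine Filter.mem_add.2 ⟨V ∩ {v + φ a}ᶜ, inter_mem hV (isOpen_compl_singleton.mem_nhds hy.symm),
      φ '' (C' ∩ {b | b = a → a = 0}), image_mem_map (inter_mem hC' ha'), ?_⟩
    rintro _ ⟨w, ⟨hw, hwne⟩, _, ⟨b, ⟨hb, hba⟩, rfl⟩, rfl⟩ hwb
    obtain rfl := hunique b hb w hw a ha v hv hwb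
    exact hwne (by simpa [hba rfl] using hwb)
  · exact Filter.mem_add.2 ⟨V, hV, φ '' C', image_mem_map hC', fun z hz hzy => hyV (hzy ▸ hz)⟩

theorem IsMinimal.singleton_zero_mem_of_map [T1Space G] (hmin : IsMinimal G)
    (hF : IsGroupFilter 𝓕) (hsep : ∀ a ≠ 0, {a}ᶜ ∈ 𝓕) (hW : W ∈ 𝓝 0) (hC : C ∈ 𝓕)
    (hCW : ∀ a ∈ C, φ a ∈ W → a = 0) : {0} ∈ 𝓕 := by
  have hle : 𝓕.map φ ≤ 𝓝 0 := hmin.le_nhds_zero (hF.map φ) fun _ =>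
    compl_singleton_mem_nhds_zero_add_map hF hsep hW hC hCW
  filter_upwards [hC, hle hW] using hCW

end GroupFilterEmbedding

section BoundedOrder

/-- The sets `{c | ∀ i, |c i| ≤ 2 ^ i / 2 ^ n}`, which shrink to `0` without becoming trivial. -/
def dyadicBall (n : ℕ) : Set (ℕ →₀ ℤ) :=
  {c | ∀ i, |c i| * 2 ^ n ≤ 2 ^ i}

/-- The filter of neighbourhoods of `0` in the group topology generated by the dyadic balls. -/
def dyadicFilter : Filter (ℕ →₀ ℤ) :=
  ⨅ n, 𝓟 (dyadicBall n)

theorem dyadicBall_antitone : Antitone dyadicBall := fun _ _ hmn _ hc i =>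
  (mul_le_mul_of_nonneg_left (pow_le_pow_right₀ one_le_two hmn) (abs_nonneg _)).trans (hc i)

theorem hasBasis_dyadicFilter : dyadicFilter.HasBasis (fun _ => True) dyadicBall :=
  hasBasis_iInf_principal dyadicBall_antitone.directed_ge

theorem dyadicBall_succ_add_subset (n : ℕ) :
    dyadicBall (n + 1) + dyadicBall (n + 1) ⊆ dyadicBall n := by
  rintro _ ⟨c, hc, d, hd, rfl⟩ i
  have hci := hc i
  have hdi := hd i
  rw [pow_succ, ← mul_assoc] at hci hdi
  calc |c i + d i| * 2 ^ n ≤ (|c i| + |d i|) * 2 ^ n := by gcongr; exact abs_add_le _ _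
    _ ≤ 2 ^ i := by linarith

theorem isGroupFilter_dyadicFilter : IsGroupFilter dyadicFilter where
  pure_zero_le := hasBasis_dyadicFilter.ge_iff.2 fun n _ i => by simp
  neg_le := hasBasis_dyadicFilter.ge_iff.2 fun n _ =>
    Filter.mem_neg.2 (mem_of_superset (hasBasis_dyadicFilter.mem_of_mem (i := n) trivial)
      fun c hc i => by simpa using hc i)
  add_le := hasBasis_dyadicFilter.ge_iff.2 fun n _ =>
    have hn := hasBasis_dyadicFilter.mem_of_mem (i := n + 1) trivial
    Filter.mem_add.2 ⟨_, hn, _, hn, dyadicBall_succ_add_subset n⟩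

theorem compl_singleton_mem_dyadicFilter {c : ℕ →₀ ℤ} (hc : c ≠ 0) : {c}ᶜ ∈ dyadicFilter := by
  obtain ⟨i, hi⟩ := Finsupp.ne_iff.1 hc
  refine hasBasis_dyadicFilter.mem_iff.2 ⟨i + 1, trivial, ?_⟩
  rintro _ hd rfl
  have hlt : (2 : ℤ) ^ i < 2 ^ (i + 1) := pow_lt_pow_right₀ one_lt_two i.lt_succ_self
  exact (hlt.trans_le (le_mul_of_one_le_left (by positivity) (Int.one_le_abs hi))).not_ge (hd i)

theorem singleton_zero_notMem_dyadicFilter : {0} ∉ dyadicFilter := by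
  intro h
  obtain ⟨n, -, hn⟩ := hasBasis_dyadicFilter.mem_iff.1 h
  have hsingle : Finsupp.single n (1 : ℤ) ∈ dyadicBall n := fun i => by
    rcases eq_or_ne n i with rfl | hni
    · simp
    · simp [hni]
  simpa using hn hsingle

theorem exists_leading_index {R : Type*} [Zero R] {c : ℕ →₀ R} (hc : c ≠ 0) :
    ∃ n, c n ≠ 0 ∧ ∀ i, n < i → c i = 0 := by
  obtain ⟨n, hn, hmax⟩ := c.support.exists_max_image id (Finsupp.support_nonempty_iff.2 hc)
  refine ⟨n, Finsupp.mem_support_iff.1 hn, fun i hi => ?_⟩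
  by_contra hci
  exact hi.not_ge (hmax i (Finsupp.mem_support_iff.2 hci))

variable {G : Type*} [AddCommGroup G] [TopologicalSpace G] [IsTopologicalAddGroup G]

theorem exists_nhds_zero_sub_sub_subset {U : Set G} (hU : U ∈ 𝓝 0) :
    ∃ V ∈ 𝓝 (0 : G), V - V - (V - V) ⊆ U := by
  obtain ⟨V, hV, -, hVneg, hVU⟩ := exists_closed_nhds_zero_neg_eq_add_subset hU
  obtain ⟨W, hW, -, hWneg, hWV⟩ := exists_closed_nhds_zero_neg_eq_add_subset hV
  have hsub : W - W ⊆ V := by rwa [sub_eq_add_neg, hWneg]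
  refine ⟨W, hW, (sub_subset_sub hsub hsub).trans ?_⟩
  rwa [sub_eq_add_neg, hVneg]

theorem IsMinimal.exists_finCovered_zmultiplesOf [T1Space G] (hmin : IsMinimal G) {U : Set G}
    (hU : U ∈ 𝓝 0) : ∃ k : ℤ, k ≠ 0 ∧ FinCovered (zmultiplesOf G k : Set G) U := by
  by_contra! hcon
  obtain ⟨W, hW, hWU⟩ := exists_nhds_zero_sub_sub_subset hU
  obtain ⟨x, hx⟩ := exists_seq_linearCombination_notMem (fun _ => W) (fun n => 2 ^ n)
  refine singleton_zero_notMem_dyadicFilter (hmin.singleton_zero_mem_of_map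
    (φ := (Finsupp.linearCombination ℤ x).toAddMonoidHom) isGroupFilter_dyadicFilter
    (fun _ => compl_singleton_mem_dyadicFilter) hW
    (hasBasis_dyadicFilter.mem_of_mem (i := 0) trivial) fun c hc hcW => ?_)
  by_contra hc0
  obtain ⟨n, hn, hgt⟩ := exists_leading_index hc0
  refine hx n c hgt (fun i => ?_) 0 n.zero_le (fun h => hcon _ hn (h.mono Subset.rfl hWU)) hcW
  rcases le_or_gt i n with hin | hin
  · have hci : |c i| ≤ 2 ^ i := by simpa using hc i
    exact hci.trans (pow_le_pow_right₀ one_le_two hin)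
  · simp [hgt i hin]

end BoundedOrder

section Multiples

variable {G : Type*} [AddCommGroup G] {p : ℕ}

theorem mem_zmultiplesOf {m : ℤ} {g : G} : g ∈ zmultiplesOf G m ↔ ∃ y : G, m • y = g :=
  Iff.rfl

theorem zmultiplesOf_le_of_dvd {a b : ℤ} (h : a ∣ b) : zmultiplesOf G b ≤ zmultiplesOf G a := by
  obtain ⟨c, rfl⟩ := h
  rintro _ ⟨y, rfl⟩
  exact mem_zmultiplesOf.2 ⟨c • y, (mul_smul a c y).symm⟩

theorem zsmul_mem_zmultiplesOf_mul {n q z : ℤ} {g : G} (hg : g ∈ zmultiplesOf G n) (hz : q ∣ z) :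
    z • g ∈ zmultiplesOf G (n * q) := by
  obtain ⟨y, rfl⟩ := mem_zmultiplesOf.1 hg
  exact zmultiplesOf_le_of_dvd (mul_dvd_mul_left n hz)
    (mem_zmultiplesOf.2 ⟨y, by rw [mul_comm, mul_smul]⟩)

theorem linearCombination_mem_zmultiplesOf_mul {x : ℕ → G} {n q : ℤ}
    (hx : ∀ i, x i ∈ zmultiplesOf G n) {c : ℕ →₀ ℤ} (hc : ∀ i, q ∣ c i) :
    Finsupp.linearCombination ℤ x c ∈ zmultiplesOf G (n * q) := by
  rw [Finsupp.linearCombination_apply]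
  exact sum_mem fun i _ => zsmul_mem_zmultiplesOf_mul (hx i) (hc i)

theorem linearCombination_smul_apply {ι R M : Type*} [CommSemiring R] [AddCommMonoid M]
    [Module R M] (a : ι → R) (x : ι → M) (c : ι →₀ R) :
    Finsupp.linearCombination R (fun i => a i • x i) c =
      Finsupp.linearCombination R x (a • c) := by
  have hsupp : (a • c).support ⊆ c.support := fun i hi => by
    rw [Finsupp.mem_support_iff] at hi ⊢
    exact right_ne_zero_of_mul hi
  simp only [Finsupp.linearCombination_apply]
  rw [Finsupp.sum_of_support_subset _ hsupp _ fun i _ => zero_smul R (x i)]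
  exact Finset.sum_congr rfl fun i _ => by simp [mul_smul, smul_comm (a i)]

theorem image_zmultiplesOf (m n : ℤ) :
    zsmulAddGroupHom m '' (zmultiplesOf G n : Set G) = zmultiplesOf G (m * n) := by
  ext g
  simp only [mem_image, SetLike.mem_coe, mem_zmultiplesOf, exists_exists_eq_and,
    zsmulAddGroupHom_apply, mul_smul]

theorem zmultiplesOf_mul_pow_subset (hp : p.Prime) (n : ℤ) {z : ℤ} {j : ℕ} (hz : (p : ℤ) ^ j ∣ z)
    (hz' : ¬ (p : ℤ) ^ (j + 1) ∣ z) :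
    (zmultiplesOf G (n * p ^ j) : Set G) ⊆ zmultiplesOf G (n * z) +
      zmultiplesOf G (n * p ^ (j + 1)) := by
  obtain ⟨u, rfl⟩ := hz
  have hu : IsCoprime u p := by
    refine ((Nat.prime_iff_prime_int.1 hp).coprime_iff_not_dvd.2 fun h => hz' ?_).symm
    exact pow_succ (p : ℤ) j ▸ mul_dvd_mul_left _ h
  obtain ⟨a, b, hab⟩ := hu
  rintro _ ⟨y, rfl⟩
  refine ⟨_, mem_zmultiplesOf.2 ⟨a • y, rfl⟩, _, mem_zmultiplesOf.2 ⟨b • y, rfl⟩, ?_⟩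
  simp only [zsmulAddGroupHom_apply, ← mul_smul, ← add_smul]
  congr 1
  linear_combination (n * p ^ j) * hab

theorem FinCovered.zmultiplesOf_mul_pow (hp : p.Prime) {n z : ℤ} {j : ℕ} {W : Set G}
    (hz : (p : ℤ) ^ j ∣ z) (hz' : ¬ (p : ℤ) ^ (j + 1) ∣ z)
    (h : FinCovered (zmultiplesOf G (n * z) : Set G) (zmultiplesOf G (n * p ^ (j + 1)) + W)) :
    FinCovered (zmultiplesOf G (n * p ^ j) : Set G) (zmultiplesOf G (n * p ^ (j + 1)) + W) := by
  have hsub : FinCovered (zmultiplesOf G (n * p ^ j) : Set G)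
      (zmultiplesOf G (n * z) + zmultiplesOf G (n * p ^ (j + 1))) :=
    ⟨{0}, finite_singleton 0, by simpa using zmultiplesOf_mul_pow_subset hp n hz hz'⟩
  have hcov := hsub.trans_add h
  rwa [add_right_comm, coe_add_coe] at hcov

end Multiples

section TotallyBoundedMultiples

variable {G : Type*} [AddCommGroup G] [TopologicalSpace G] [IsTopologicalAddGroup G]

theorem totallyBoundedMod_univ_zmultiplesOf
    (h : ∀ (n : ℤ) (p : ℕ), p.Prime →
      TotallyBoundedMod (zmultiplesOf G n : Set G) (zmultiplesOf G (n * p)))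
    {m : ℕ} (hm : m ≠ 0) : TotallyBoundedMod univ (zmultiplesOf G m : Set G) := by
  induction m using induction_on_primes with
  | zero => exact absurd rfl hm
  | one => exact totallyBoundedMod_of_subset fun g _ => mem_zmultiplesOf.2 ⟨g, by simp⟩
  | prime_mul p a hp ih =>
    rw [mul_comm, Nat.cast_mul]
    exact (ih (right_ne_zero_of_mul hm)).trans (h a p hp)

theorem IsMinimal.finCovered_of_totallyBoundedMod [T1Space G] (hmin : IsMinimal G) {A : Set G}
    (hA : ∀ m : ℕ, m ≠ 0 → TotallyBoundedMod A (zmultiplesOf G m)) {V : Set G} (hV : V ∈ 𝓝 0) :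
    FinCovered A V := by
  obtain ⟨W, hW, -, -, hWV⟩ := exists_closed_nhds_zero_neg_eq_add_subset hV
  obtain ⟨k, hk, hkW⟩ := hmin.exists_finCovered_zmultiplesOf hW
  have hkW' : FinCovered (zmultiplesOf G k.natAbs : Set G) W :=
    hkW.mono (zmultiplesOf_le_of_dvd (Int.dvd_natAbs.2 dvd_rfl)) Subset.rfl
  exact ((hA _ (Int.natAbs_ne_zero.2 hk) W hW).trans_add hkW').mono Subset.rfl hWV

end TotallyBoundedMultiples

section SmallCombinations

variable {G : Type*} [AddCommGroup G] {x : ℕ → G} {p : ℕ}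

theorem pow_succ_dvd_of_linearCombination_mem (hp : p ≠ 0) {n : ℤ} {j : ℕ} {W : Set G}
    (hx : ∀ i, x i ∈ zmultiplesOf G n)
    (hW : ∀ m, j ≤ m → ∀ c : ℕ →₀ ℤ, (∀ i, m < i → c i = 0) → (∀ i, |c i| ≤ p ^ (m + 1)) →
      (p : ℤ) ^ j ∣ c m → ¬ (p : ℤ) ^ (j + 1) ∣ c m →
        Finsupp.linearCombination ℤ x c ∉ (zmultiplesOf G (n * p ^ (j + 1)) : Set G) + W)
    {c : ℕ →₀ ℤ} (hc : Finsupp.linearCombination ℤ x c ∈ W)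
    (hdvd : ∀ i, j ≤ i → (p : ℤ) ^ j ∣ c i) {i : ℕ} (hi : j ≤ i) : (p : ℤ) ^ (j + 1) ∣ c i := by
  set q : ℤ := p ^ (j + 1) with hq
  have hq0 : 0 < q := by positivity
  by_contra hci
  set r : ℕ →₀ ℤ := c.mapRange (· % q) (Int.zero_emod q) with hr
  have hri : r i ≠ 0 := fun h => hci (Int.dvd_of_emod_eq_zero h)
  obtain ⟨m, hm, hgt⟩ := exists_leading_index (Finsupp.ne_iff.2 ⟨i, hri⟩)
  have him : i ≤ m := le_of_not_gt fun h => hri (hgt i h)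
  refine hW m (hi.trans him) r hgt (fun l => ?_) ?_ ?_ ?_
  · rw [hr, Finsupp.mapRange_apply, abs_of_nonneg (Int.emod_nonneg _ hq0.ne')]
    calc c l % q ≤ q := (Int.emod_lt_of_pos _ hq0).le
      _ ≤ p ^ (m + 1) := by
        rw [hq]
        gcongr
        · exact_mod_cast Nat.one_le_iff_ne_zero.2 hp
        · exact hi.trans him
  · exact (EuclideanDomain.dvd_mod_iff (pow_dvd_pow _ j.le_succ)).2 (hdvd m (hi.trans him))
  · exact fun h => hm (Int.emod_eq_zero_of_dvd ((EuclideanDomain.dvd_mod_iff dvd_rfl).1 h))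
  · refine ⟨_, linearCombination_mem_zmultiplesOf_mul (c := r - c) hx fun l => ?_, _, hc, ?_⟩
    · rw [Finsupp.sub_apply, dvd_sub_comm]
      exact Int.dvd_self_sub_emod
    · simp

variable [TopologicalSpace G]

/-- If a combination `∑ cᵢ xᵢ` is small enough, then `p ^ k` divides `cᵢ` for all `i ≥ k - 1`: the
topology induced on the span of `x` is at least as fine as a `p`-adic one, with a threshold on the
indices that leaves room for constructing `x` by recursion. -/
def SmallCombinationsDvd (x : ℕ → G) (p k : ℕ) : Prop :=
  ∃ W ∈ 𝓝 0, ∀ c : ℕ →₀ ℤ, Finsupp.linearCombination ℤ x c ∈ W →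
    ∀ i, k ≤ i + 1 → (p : ℤ) ^ k ∣ c i

variable [IsTopologicalAddGroup G]

theorem exists_seq_linearCombination_notMem_zmultiplesOf_add (n : ℤ) (hp : p.Prime) :
    ∃ x : ℕ → G, (∀ i, x i ∈ zmultiplesOf G n) ∧ ∀ j,
      ¬ TotallyBoundedMod (zmultiplesOf G (n * p ^ j) : Set G) (zmultiplesOf G (n * p ^ (j + 1))) →
      ∃ W ∈ 𝓝 0, ∀ m, j ≤ m → ∀ c : ℕ →₀ ℤ, (∀ i, m < i → c i = 0) → (∀ i, |c i| ≤ p ^ (m + 1)) →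
        (p : ℤ) ^ j ∣ c m → ¬ (p : ℤ) ^ (j + 1) ∣ c m →
          Finsupp.linearCombination ℤ x c ∉ (zmultiplesOf G (n * p ^ (j + 1)) : Set G) + W := by
  have hW (j : ℕ) : ∃ W ∈ 𝓝 (0 : G), ¬ TotallyBoundedMod (zmultiplesOf G (n * p ^ j) : Set G)
      (zmultiplesOf G (n * p ^ (j + 1))) → ¬ FinCovered (zmultiplesOf G (n * p ^ j) : Set G)
        (zmultiplesOf G (n * p ^ (j + 1)) + (W - W - (W - W))) := by
    by_cases h : TotallyBoundedMod (zmultiplesOf G (n * p ^ j) : Set G)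
      (zmultiplesOf G (n * p ^ (j + 1)))
    · exact ⟨univ, univ_mem, fun h' => absurd h h'⟩
    · simp only [TotallyBoundedMod, not_forall] at h
      obtain ⟨U, hU, hcov⟩ := h
      obtain ⟨W, hW, hWU⟩ := exists_nhds_zero_sub_sub_subset hU
      exact ⟨W, hW, fun _ h' => hcov (h'.mono Subset.rfl (add_subset_add_left hWU))⟩
  choose W hW hcov using hW
  obtain ⟨y, hy⟩ := exists_seq_linearCombination_notMem
    (fun j => (zmultiplesOf G (n * p ^ (j + 1)) : Set G) + W j) fun m => |n| * p ^ (m + 1)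
  refine ⟨fun i => n • y i, fun i => mem_zmultiplesOf.2 ⟨y i, rfl⟩, fun j hj => ⟨W j, hW j, ?_⟩⟩
  intro m hjm c hgt hbound hdvd hndvd
  rw [linearCombination_smul_apply]
  refine hy m ((fun _ => n) • c) (fun i hi => by simp [hgt i hi]) (fun i => ?_) j hjm
    fun h => hcov j hj ?_
  · rw [Finsupp.coe_pointwise_smul, Pi.smul_apply', smul_eq_mul, abs_mul]
    gcongr
    exact hbound i
  · refine FinCovered.zmultiplesOf_mul_pow hp hdvd hndvd (h.mono Subset.rfl ?_)
    simp only [add_sub_add_comm, coe_sub_coe, Subset.rfl]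

theorem exists_seq_smallCombinationsDvd (n : ℤ) (hp : p.Prime) :
    ∃ x : ℕ → G, (∀ i, x i ∈ zmultiplesOf G n) ∧ ∀ k,
      (∀ j < k, ¬ TotallyBoundedMod (zmultiplesOf G (n * p ^ j) : Set G)
        (zmultiplesOf G (n * p ^ (j + 1)))) → SmallCombinationsDvd x p k := by
  obtain ⟨x, hx, hxW⟩ := exists_seq_linearCombination_notMem_zmultiplesOf_add (G := G) n hp
  refine ⟨x, hx, fun k hk => ?_⟩
  induction k with
  | zero => exact ⟨univ, univ_mem, by simp⟩
  | succ k ih =>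
    obtain ⟨W, hW, hdvd⟩ := ih fun j hj => hk j (hj.trans k.lt_succ_self)
    obtain ⟨W', hW', havoid⟩ := hxW k (hk k k.lt_succ_self)
    exact ⟨W ∩ W', inter_mem hW hW', fun c hc i hi =>
      pow_succ_dvd_of_linearCombination_mem hp.ne_zero hx havoid hc.2
        (fun l hl => hdvd c hc.1 l (hl.trans l.le_succ)) (Nat.le_of_succ_le_succ hi)⟩

end SmallCombinations

section FactorialMultiples

/-- The largest divisor of `k!` prime to `p`. Multiplying the terms of a sequence by these numbers
makes its tails highly divisible without affecting divisibility by `p`. -/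
def factorialPrimeTo (p k : ℕ) : ℕ :=
  ordCompl[p] k.factorial

variable {p : ℕ}

theorem coprime_factorialPrimeTo (hp : p.Prime) (k : ℕ) : p.Coprime (factorialPrimeTo p k) :=
  Nat.coprime_ordCompl hp k.factorial_ne_zero

theorem factorialPrimeTo_dvd_factorialPrimeTo {k l : ℕ} (hkl : k ≤ l) :
    factorialPrimeTo p k ∣ factorialPrimeTo p l :=
  Nat.ordCompl_dvd_ordCompl_of_dvd (Nat.factorial_dvd_factorial hkl) p

theorem factorial_dvd_factorialPrimeTo_mul_pow (hp : p.Prime) (k : ℕ) :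
    k.factorial ∣ factorialPrimeTo p k * p ^ k := by
  have : Fact p.Prime := ⟨hp⟩
  have hle : k.factorial.factorization p ≤ k :=
    Nat.factorization_def k.factorial hp ▸ padicValNat_factorial_le (p := p) k
  calc k.factorial = factorialPrimeTo p k * p ^ k.factorial.factorization p := by
        rw [mul_comm]
        exact (Nat.ordProj_mul_ordCompl_eq_self _ p).symm
    _ ∣ factorialPrimeTo p k * p ^ k := mul_dvd_mul_left _ (pow_dvd_pow p hle)

variable {G : Type*} [AddCommGroup G] [TopologicalSpace G] [IsTopologicalAddGroup G]

theorem IsMinimal.eventuallyPrecompact_factorial [T1Space G] (hmin : IsMinimal G) :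
    EventuallyPrecompact fun k : ℕ => zmultiplesOf G k.factorial where
  antitone _ _ hkl := zmultiplesOf_le_of_dvd (mod_cast Nat.factorial_dvd_factorial hkl)
  exists_finCovered U hU := by
    obtain ⟨m, hm, hmU⟩ := hmin.exists_finCovered_zmultiplesOf hU
    have hdvd : m ∣ m.natAbs.factorial := Int.natAbs_dvd.1
      (mod_cast Nat.dvd_factorial (Int.natAbs_pos.2 hm) le_rfl)
    exact ⟨_, hmU.mono (zmultiplesOf_le_of_dvd hdvd) Subset.rfl⟩

end FactorialMultiples

section SpanCovering

variable {G : Type*} [AddCommGroup G] {x : ℕ → G} {p k : ℕ}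

theorem finCovered_setOf_linearCombination (x : ℕ → G) (k : ℕ) {q : ℤ} (hq : q ≠ 0)
    {B : AddSubgroup G} (hB : zmultiplesOf G q ≤ B) :
    FinCovered {g | ∃ c : ℕ →₀ ℤ, (∀ i, k ≤ i → c i • x i ∈ B) ∧
      Finsupp.linearCombination ℤ x c = g} B := by
  refine ⟨(fun f : Fin k → ℤ => ∑ i, f i • x i) '' Icc 0 (fun _ => |q|),
    (finite_Icc _ _).image _, ?_⟩
  rintro _ ⟨c, hc, rfl⟩
  set r : ℕ →₀ ℤ := (c.filter (· < k)).mapRange (· % q) (Int.zero_emod q) with hr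
  have hr_lt {i : ℕ} (hi : i < k) : r i = c i % q := by simp [hr, hi]
  have hr_ge {i : ℕ} (hi : k ≤ i) : r i = 0 := by simp [hr, hi.not_gt]
  refine ⟨_, ⟨fun i => r i, ⟨fun i => ?_, fun i => ?_⟩, rfl⟩, _,
    (?_ : Finsupp.linearCombination ℤ x (c - r) ∈ B), ?_⟩
  · exact (Int.emod_nonneg _ hq).trans_eq (hr_lt i.2).symm
  · exact (hr_lt i.2).trans_le (Int.emod_lt_abs _ hq).le
  · rw [Finsupp.linearCombination_apply]
    refine sum_mem fun i _ => ?_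
    simp only [Finsupp.sub_apply]
    rcases lt_or_ge i k with hi | hi
    · rw [hr_lt hi]
      obtain ⟨t, ht⟩ : q ∣ c i - c i % q := Int.dvd_self_sub_emod
      exact hB (mem_zmultiplesOf.2 ⟨t • x i, by rw [ht, mul_smul]⟩)
    · rw [hr_ge hi, sub_zero]
      exact hc i hi
  · simp only
    rw [← linearCombination_eq_sum_fin fun i => hr_ge, map_sub, add_sub_cancel]

variable [TopologicalSpace G]

theorem SmallCombinationsDvd.zsmul (h : SmallCombinationsDvd x p k) {a : ℕ → ℤ}
    (ha : ∀ i, IsCoprime (p : ℤ) (a i)) : SmallCombinationsDvd (fun i => a i • x i) p k := by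
  obtain ⟨W, hW, hdvd⟩ := h
  refine ⟨W, hW, fun c hc i hi => ?_⟩
  rw [linearCombination_smul_apply] at hc
  exact (ha i).pow_left.dvd_of_dvd_mul_left (hdvd _ hc i hi)

theorem SmallCombinationsDvd.exists_inter_subset_image (hdvd : SmallCombinationsDvd x p 1) :
    ∃ O ∈ 𝓝 0, range (Finsupp.linearCombination ℤ x) ∩ O ⊆
      zsmulAddGroupHom (p : ℤ) '' range (Finsupp.linearCombination ℤ x) := by
  obtain ⟨W, hW, hdvd⟩ := hdvd
  refine ⟨W, hW, ?_⟩
  rintro _ ⟨⟨c, rfl⟩, hc⟩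
  have hcp : c = (p : ℤ) • c.mapRange (· / (p : ℤ)) (Int.zero_ediv _) := by
    ext i
    have hi : (p : ℤ) ∣ c i := by simpa using hdvd c hc i (by simp)
    simp [Int.mul_ediv_cancel' hi]
  exact ⟨_, mem_range_self _, (map_smul _ _ _).symm.trans (congrArg _ hcp.symm)⟩

variable [IsTopologicalAddGroup G]

theorem FinCovered.exists_inter_subset_of_isClosed {A : Set G} {D : AddSubgroup G}
    (h : FinCovered A D) (hD : IsClosed (D : Set G)) : ∃ O ∈ 𝓝 0, A ∩ O ⊆ (D : Set G) := by
  obtain ⟨F, hF, hA⟩ := h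
  have hclosed : IsClosed (F \ D + (D : Set G)) :=
    hD.add_left_of_isCompact (hF.subset sdiff_subset).isCompact
  refine ⟨(F \ D + (D : Set G))ᶜ, hclosed.isOpen_compl.mem_nhds ?_, ?_⟩
  · rintro ⟨f, ⟨-, hf⟩, d, hd, hfd⟩
    exact hf (eq_neg_of_add_eq_zero_left hfd ▸ D.neg_mem hd)
  · rintro a ⟨ha, haO⟩
    obtain ⟨f, hf, d, hd, rfl⟩ := hA ha
    by_contra had
    exact haO ⟨f, ⟨hf, fun hfD => had (D.add_mem hfD hd)⟩, d, hd, rfl⟩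

theorem SmallCombinationsDvd.exists_not_finCovered (h : SmallCombinationsDvd x p 1) (hp : p ≠ 1) :
    ∃ V ∈ 𝓝 0, ¬ FinCovered (range x) V := by
  obtain ⟨W, hW, hdvd⟩ := h
  obtain ⟨V, hV, -, hVneg, hVW⟩ := exists_closed_nhds_zero_neg_eq_add_subset hW
  refine ⟨V, hV, fun ⟨F, hF, hcov⟩ => ?_⟩
  choose f hfF hf using fun i => hcov (mem_range_self i)
  obtain ⟨i, -, j, -, hij, hfij⟩ :=
    infinite_univ.exists_ne_map_eq_of_mapsTo (f := f) (fun i _ => hfF i) hF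
  have hsmall : x i - x j ∈ W := by
    obtain ⟨v, hv, hvi⟩ := hf i
    obtain ⟨w, hw, hwj⟩ := hf j
    refine hVW ⟨v, hv, -w, by rwa [← hVneg, Set.neg_mem_neg], ?_⟩
    simp only at hvi hwj ⊢
    rw [← hvi, ← hwj, hfij]
    abel
  have hone := hdvd (Finsupp.single i 1 - Finsupp.single j 1) (by simpa using hsmall) i (by simp)
  simp only [pow_one, Finsupp.sub_apply, Finsupp.single_eq_same, Finsupp.single_eq_of_ne hij,
    sub_zero] at hone
  exact hp (Nat.dvd_one.1 (mod_cast hone))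

end SpanCovering

section Precompactness

variable {G : Type*} [AddCommGroup G] [TopologicalSpace G] [IsTopologicalAddGroup G]
  {x : ℕ → G} {p : ℕ}

theorem exists_seq_smallCombinationsDvd_of_factorialPrimeTo (n : ℤ) (hp : p.Prime) :
    ∃ x : ℕ → G, (∀ k i, k ≤ i → x i ∈ zmultiplesOf G (n * factorialPrimeTo p k)) ∧ ∀ k,
      (∀ j < k, ¬ TotallyBoundedMod (zmultiplesOf G (n * p ^ j) : Set G)
        (zmultiplesOf G (n * p ^ (j + 1)))) → SmallCombinationsDvd x p k := by
  obtain ⟨x, hx, hdvd⟩ := exists_seq_smallCombinationsDvd (G := G) n hp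
  refine ⟨fun i => (factorialPrimeTo p i : ℤ) • x i, fun k i hki => ?_, fun k hk => ?_⟩
  · exact zsmul_mem_zmultiplesOf_mul (hx i) (mod_cast factorialPrimeTo_dvd_factorialPrimeTo hki)
  · exact (hdvd k hk).zsmul fun i => Nat.isCoprime_iff_coprime.2 (coprime_factorialPrimeTo hp i)

theorem SmallCombinationsDvd.exists_inter_subset_topologicalClosure {k : ℕ} (hp : p.Prime)
    (hdvd : SmallCombinationsDvd x p k)
    (hx : ∀ i, k ≤ i → x i ∈ zmultiplesOf G (factorialPrimeTo p k)) :
    ∃ O ∈ 𝓝 0, range (Finsupp.linearCombination ℤ x) ∩ O ⊆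
      ((zmultiplesOf G k.factorial).topologicalClosure : Set G) := by
  obtain ⟨W, hW, hdvd⟩ := hdvd
  have hcov : FinCovered (range (Finsupp.linearCombination ℤ x) ∩ W)
      ((zmultiplesOf G k.factorial).topologicalClosure : Set G) := by
    refine (finCovered_setOf_linearCombination x k (mod_cast k.factorial_ne_zero) le_rfl).mono ?_
      subset_closure
    rintro _ ⟨⟨c, rfl⟩, hc⟩
    refine ⟨c, fun i hi => ?_, rfl⟩
    have hfact : (k.factorial : ℤ) ∣ factorialPrimeTo p k * p ^ k :=
      mod_cast factorial_dvd_factorialPrimeTo_mul_pow hp k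
    exact zmultiplesOf_le_of_dvd hfact
      (zsmul_mem_zmultiplesOf_mul (hx i hi) (hdvd c hc i (hi.trans i.le_succ)))
  obtain ⟨O, hO, hsub⟩ :=
    hcov.exists_inter_subset_of_isClosed (AddSubgroup.isClosed_topologicalClosure _)
  exact ⟨W ∩ O, inter_mem hW hO, by rwa [← inter_assoc]⟩

theorem IsMinimal.exists_totallyBoundedMod_zmultiplesOf_mul_pow [T2Space G] (hmin : IsMinimal G)
    (n : ℤ) (hp : p.Prime) : ∃ j : ℕ, TotallyBoundedMod (zmultiplesOf G (n * p ^ j) : Set G)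
      (zmultiplesOf G (n * p ^ (j + 1))) := by
  by_contra! hcon
  obtain ⟨x, hx, hdvd⟩ := exists_seq_smallCombinationsDvd_of_factorialPrimeTo (G := G) n hp
  obtain ⟨V, hV, hVcov⟩ := (hdvd 1 fun j _ => hcon j).exists_not_finCovered hp.ne_one
  have hspan := hmin.finCovered_addSubgroup
    (S := (Finsupp.linearCombination ℤ x).toAddMonoidHom.range)
    hmin.eventuallyPrecompact_factorial.topologicalClosure
    (fun k => (hdvd k fun j _ => hcon j).exists_inter_subset_topologicalClosure hp
      fun i hi => zmultiplesOf_le_of_dvd (dvd_mul_left _ n) (hx k i hi)) hV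
  exact hVcov (hspan.mono (range_subset_iff.2 fun i => ⟨Finsupp.single i 1, by simp⟩) Subset.rfl)

theorem totallyBoundedMod_zmultiplesOf_mul_pow {n : ℤ}
    (h : TotallyBoundedMod (zmultiplesOf G n : Set G) (zmultiplesOf G (n * p))) (k : ℕ) :
    TotallyBoundedMod (zmultiplesOf G n : Set G) (zmultiplesOf G (n * p ^ k)) := by
  induction k with
  | zero => simpa using totallyBoundedMod_of_subset Subset.rfl
  | succ k ih =>
    have hstep := h.image (f := zsmulAddGroupHom ((p : ℤ) ^ k)) (continuous_zsmul _)
    rw [image_zmultiplesOf, image_zmultiplesOf] at hstep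
    convert ih.trans ?_ using 2
    convert hstep using 3 <;> ring

theorem totallyBoundedMod_image_range_linearCombination {n : ℤ} (hp : p.Prime)
    (h : TotallyBoundedMod (zmultiplesOf G (n * p) : Set G) (zmultiplesOf G (n * p * p)))
    {k : ℕ} (hx : ∀ i, k ≤ i → x i ∈ zmultiplesOf G (n * factorialPrimeTo p k)) :
    TotallyBoundedMod (zsmulAddGroupHom (p : ℤ) '' range (Finsupp.linearCombination ℤ x))
      (zmultiplesOf G k.factorial) := by
  have hfact : (k.factorial : ℤ) ∣ factorialPrimeTo p k * p ^ k :=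
    mod_cast factorial_dvd_factorialPrimeTo_mul_pow hp k
  set a : ℤ := (factorialPrimeTo p k : ℤ)
  have hmod : FinCovered (zsmulAddGroupHom (p : ℤ) '' range (Finsupp.linearCombination ℤ x))
      (zmultiplesOf G (a * (n * p)) + zmultiplesOf G k.factorial : Set G) := by
    rw [← AddSubgroup.add_normal]
    refine (finCovered_setOf_linearCombination x k (mod_cast k.factorial_ne_zero)
      le_sup_right).mono ?_ Subset.rfl
    rintro _ ⟨_, ⟨c, rfl⟩, rfl⟩
    refine ⟨(p : ℤ) • c, fun i hi => ?_, map_smul _ _ _⟩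
    rw [← mul_assoc, mul_comm a n]
    exact AddSubgroup.mem_sup_left (zsmul_mem_zmultiplesOf_mul (hx i hi) (dvd_mul_right _ _))
  have htail := (totallyBoundedMod_zmultiplesOf_mul_pow h k).image
    (f := zsmulAddGroupHom a) (continuous_zsmul a)
  rw [image_zmultiplesOf, image_zmultiplesOf] at htail
  have hle : zmultiplesOf G (a * (n * p * p ^ k)) ≤ zmultiplesOf G k.factorial :=
    zmultiplesOf_le_of_dvd (hfact.trans ⟨n * p, by ring⟩)
  intro W hW
  refine (hmod.trans_add (htail W hW)).mono Subset.rfl ?_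
  rw [add_right_comm]
  nth_rw 2 [← coe_add_coe (zmultiplesOf G (k.factorial : ℤ))]
  gcongr

theorem IsMinimal.totallyBoundedMod_of_mul_prime [T2Space G] (hmin : IsMinimal G) {n : ℤ}
    (hp : p.Prime)
    (h : TotallyBoundedMod (zmultiplesOf G (n * p) : Set G) (zmultiplesOf G (n * p * p))) :
    TotallyBoundedMod (zmultiplesOf G n : Set G) (zmultiplesOf G (n * p)) := by
  by_contra hcon
  obtain ⟨x, hx, hdvd⟩ := exists_seq_smallCombinationsDvd_of_factorialPrimeTo (G := G) n hp
  have hdvd₁ : SmallCombinationsDvd x p 1 :=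
    hdvd 1 fun j hj => by simpa [Nat.lt_one_iff.1 hj] using hcon
  let S : AddSubgroup G := (Finsupp.linearCombination ℤ x).toAddMonoidHom.range
  have hprecompact : EventuallyPrecompact fun _ : ℕ => S.map (zsmulAddGroupHom (p : ℤ)) := by
    refine ⟨antitone_const, fun U hU =>
      ⟨0, hmin.finCovered_of_totallyBoundedMod (fun m hm => ?_) hU⟩⟩
    refine (totallyBoundedMod_image_range_linearCombination hp h (hx m)).trans
      (totallyBoundedMod_of_subset (zmultiplesOf_le_of_dvd ?_))
    exact mod_cast Nat.dvd_factorial (Nat.pos_of_ne_zero hm) le_rfl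
  obtain ⟨V, hV, hVcov⟩ := hdvd₁.exists_not_finCovered hp.ne_one
  have hspan := hmin.finCovered_addSubgroup hprecompact (S := S)
    (fun _ => hdvd₁.exists_inter_subset_image) hV
  exact hVcov (hspan.mono (range_subset_iff.2 fun i => ⟨Finsupp.single i 1, by simp⟩) Subset.rfl)

theorem IsMinimal.totallyBoundedMod_zmultiplesOf_mul_prime [T2Space G] (hmin : IsMinimal G)
    (n : ℤ) (hp : p.Prime) :
    TotallyBoundedMod (zmultiplesOf G n : Set G) (zmultiplesOf G (n * p)) := by
  obtain ⟨j, hj⟩ := hmin.exists_totallyBoundedMod_zmultiplesOf_mul_pow n hp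
  induction j with
  | zero => simpa using hj
  | succ j ih =>
    simp only [pow_succ, ← mul_assoc] at hj ih
    exact ih (hmin.totallyBoundedMod_of_mul_prime hp hj)

theorem IsMinimal.finCovered_univ [T2Space G] (hmin : IsMinimal G) {V : Set G} (hV : V ∈ 𝓝 0) :
    FinCovered univ V :=
  hmin.finCovered_of_totallyBoundedMod (fun _ => totallyBoundedMod_univ_zmultiplesOf
    fun n _ => hmin.totallyBoundedMod_zmultiplesOf_mul_prime n) hV

end Precompactness

theorem IsMinimal.exists_finset_subset_add {G : Type*} [AddCommGroup G] [TopologicalSpace G]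
    [IsTopologicalAddGroup G] [T2Space G] {N : AddSubgroup G} (hN : IsMinimal N) {V : Set G}
    (hV : V ∈ 𝓝 0) : ∃ F : Finset G, (F : Set G) ⊆ N ∧ (N : Set G) ⊆ F + V := by
  obtain ⟨F, hF, hcov⟩ := hN.finCovered_univ (continuousAt_subtype_val.preimage_mem_nhds hV)
  refine ⟨(hF.image N.subtype).toFinset, ?_, fun g hg => ?_⟩
  · rw [Finite.coe_toFinset]
    exact image_subset_iff.2 fun f _ => f.2
  · obtain ⟨f, hf, v, hv, hfv⟩ := hcov (mem_univ (⟨g, hg⟩ : N))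
    rw [Finite.coe_toFinset]
    exact ⟨f, mem_image_of_mem _ hf, v, hv, congrArg N.subtype hfv⟩

/-- For a Hausdorff topological abelian group `G` the following are equivalent:
(a) `G` is almost minimal;
(b) there is a GTG neighborhood `U` of `0` such that `G` is `U`-locally minimal and
`G/U_∞` is UFSS;
(c) there is a GTG neighborhood `U` of `0` such that `G` is `U`-locally minimal and for
every neighborhood `V` of `0` there are `n ∈ ℕ` and a finite `F ⊆ U_∞` with
`(1/n)U ⊆ F + V`. -/
theorem almostMinimal_tfae {G : Type*} [AddCommGroup G] [TopologicalSpace G]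
    [IsTopologicalAddGroup G] [T2Space G] :
    (IsAlmostMinimal G ↔
      ∃ U ∈ nhds (0 : G), IsGTG U ∧ LocallyMinimalAt G U ∧
        ∃ N : AddSubgroup G, (N : Set G) = uInf U ∧ IsUFSS (G ⧸ N)) ∧
    (IsAlmostMinimal G ↔
      ∃ U ∈ nhds (0 : G), IsGTG U ∧ LocallyMinimalAt G U ∧
        ∀ V ∈ nhds (0 : G), ∃ n : ℕ, 1 ≤ n ∧
          ∃ F : Finset G, (F : Set G) ⊆ uInf U ∧ invDiv n U ⊆ (F : Set G) + V) := by
  refine ⟨⟨fun h => ?_, ?_⟩, fun h => ?_, ?_⟩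
  · obtain ⟨U, hU0, hU, hmin, N, hN, -, hufss, -⟩ := h.exists_isGTG
    exact ⟨U, hU0, hU, hmin, N, hN, hufss⟩
  · rintro ⟨U, hU0, hU, hmin, N, hN, hufss⟩
    exact hmin.isAlmostMinimal hU hU0 hN hufss
  · obtain ⟨U, hU0, hU, hmin, N, hN, hNmin, -, hbasis⟩ := h.exists_isGTG
    refine ⟨U, hU0, hU, hmin, fun V hV => ?_⟩
    obtain ⟨W, hW, -, -, hWV⟩ := exists_closed_nhds_zero_neg_eq_add_subset hV
    obtain ⟨n, hn, hnW⟩ := hbasis W hW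
    obtain ⟨F, hFN, hF⟩ := hNmin.exists_finset_subset_add hW
    refine ⟨n, hn, F, hN ▸ hFN, ?_⟩
    calc invDiv n U ⊆ N + W := hnW
      _ ⊆ F + W + W := by gcongr
      _ = F + (W + W) := add_assoc _ _ _
      _ ⊆ F + V := by gcongr
  · rintro ⟨U, hU0, hU, hmin, hbasis⟩
    have hN := hU.coe_uInfSubgroup
    refine hmin.isAlmostMinimal hU hU0 hN (hU.isUFSS_quotient hU0 hN fun V hV => ?_)
    obtain ⟨n, -, F, hF, hnF⟩ := hbasis V hV
    exact ⟨n, hnF.trans (add_subset_add_right (hF.trans_eq hN.symm))⟩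
end

section
/- Let H be a dense subgroup of a Hausdorff abelian topological group G. If H (with the subspace topology) is almost minimal, then G is almost minimal. -/
/-!
Let `N` be a closed minimal subgroup of `H` with `H ⧸ N` UFSS, and let `M` be the closure of `N`
in `G`. Then `N` is dense in `M`, and `H ⧸ N` embeds densely into `G ⧸ M`, because `O + M = O + N`
for every open `O`. Both minimality and UFSS pass from a dense subgroup to the whole group: the
neighborhoods of `0` have a basis of closed sets, and an open set is contained in a closed one as
soon as this holds on a dense subset.
-/

open Filter Set Topology
open scoped Pointwise

section Topology

variable {X Y : Type*}

theorem subset_of_preimage_subset_of_denseRange [TopologicalSpace Y] {f : X → Y}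
    (hf : DenseRange f) {U C : Set Y} (hU : IsOpen U) (hC : IsClosed C)
    (hUC : f ⁻¹' U ⊆ f ⁻¹' C) : U ⊆ C :=
  (hf.subset_closure_image_preimage_of_isOpen hU).trans
    (closure_minimal (image_subset_iff.2 hUC) hC)

theorem nhds_eq_of_le_of_induced_eq {τ σ : TopologicalSpace Y} [@RegularSpace Y τ] (hle : τ ≤ σ)
    {f : X → Y} (hf : @DenseRange Y τ X f) (hind : σ.induced f = τ.induced f) (x : X) :
    @nhds Y σ (f x) = @nhds Y τ (f x) := by
  refine le_antisymm ((@closed_nhds_basis Y τ _ (f x)).ge_iff.2 ?_) (nhds_mono hle)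
  rintro C ⟨hC, hC_closed⟩
  have hpre : f ⁻¹' C ∈ @nhds X (σ.induced f) x := by
    rw [hind, @nhds_induced Y X τ]
    exact preimage_mem_comap hC
  rw [@nhds_induced Y X σ] at hpre
  obtain ⟨U, ⟨hxU, hU⟩, hUC⟩ := ((@nhds_basis_opens Y σ (f x)).comap f).mem_iff.1 hpre
  have hUC' : U ⊆ C :=
    @subset_of_preimage_subset_of_denseRange X Y τ f hf U C (hle U hU) hC_closed hUC
  exact mem_of_superset (@IsOpen.mem_nhds Y σ (f x) U hU hxU) hUC'

end Topology

section Minimal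

variable {A B : Type*} [AddGroup A] [AddGroup B] [τA : TopologicalSpace A]
  [τB : TopologicalSpace B] [hB : IsTopologicalAddGroup B] {f : A →+ B}

theorem IsMinimal.of_isDenseEmbedding (hA : IsMinimal A) (hf : IsDenseEmbedding f) :
    IsMinimal B := by
  obtain ⟨⟨⟨hτA⟩, hdense⟩, hinj⟩ := hf
  intro σ hle hσ_group hσ_t2
  have hind : σ.induced f = τA := by
    refine hA _ (hτA.trans_le (induced_mono hle)) ?_ ?_
    · exact @topologicalAddGroup_induced B A σ _ hσ_group (A →+ B) _ _ _ f
    · exact @T2Space.of_injective_continuous A B (σ.induced f) σ hσ_t2 f hinj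
        continuous_induced_dom
  have hnhds : @nhds B σ (f 0) = @nhds B τB (f 0) :=
    nhds_eq_of_le_of_induced_eq hle hdense (hind.trans hτA) 0
  rw [map_zero] at hnhds
  exact hσ_group.ext hB hnhds

theorem IsMinimal.topologicalClosure_map {N : AddSubgroup A} (hN : IsMinimal N)
    (hf : IsEmbedding f) : IsMinimal (N.map f).topologicalClosure := by
  let toMap : N →+ N.map f := f.addSubgroupMap N
  let toClosure : N.map f →+ (N.map f).topologicalClosure :=
    AddSubgroup.inclusion (N.map f).le_topologicalClosure
  have htoMap : IsEmbedding toMap :=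
    (IsEmbedding.subtypeVal.of_comp_iff).1 (hf.comp IsEmbedding.subtypeVal)
  have htoClosure : IsEmbedding toClosure := .inclusion (N.map f).le_topologicalClosure
  have hdense : DenseRange toClosure :=
    (denseRange_inclusion_iff (N.map f).le_topologicalClosure).2 Subset.rfl
  refine hN.of_isDenseEmbedding (f := toClosure.comp toMap)
    { htoClosure.comp htoMap with dense := ?_ }
  exact hdense.comp (f.addSubgroupMap_surjective N).denseRange htoClosure.continuous

end Minimal

section UFSS

variable {A B : Type*} [AddGroup A] [AddGroup B]

theorem invDiv_mono (n : ℕ) {U V : Set A} (hUV : U ⊆ V) : invDiv n U ⊆ invDiv n V :=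
  fun _ hx k hk hkn => hUV (hx k hk hkn)

theorem zero_mem_invDiv (n : ℕ) {U : Set A} (hU : 0 ∈ U) : 0 ∈ invDiv n U :=
  fun k _ _ => by rwa [nsmul_zero]

theorem preimage_invDiv (f : A →+ B) (n : ℕ) (U : Set B) :
    f ⁻¹' invDiv n U = invDiv n (f ⁻¹' U) := by
  simp only [invDiv, preimage_ofPred_eq, mem_preimage, map_nsmul]

theorem isOpen_invDiv [TopologicalSpace A] [ContinuousAdd A] (n : ℕ) {U : Set A}
    (hU : IsOpen U) : IsOpen (invDiv n U) := by
  have hinter : invDiv n U = ⋂ k ∈ Finset.Icc 1 n, (fun x : A => k • x) ⁻¹' U := by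
    ext x
    simp [invDiv]
  rw [hinter]
  exact isOpen_biInter_finset fun k _ => hU.preimage (continuous_nsmul k)

theorem exists_isOpen_neg_eq_self_subset [TopologicalSpace A] [ContinuousNeg A] {U : Set A}
    (hU : U ∈ 𝓝 0) : ∃ W ⊆ U, IsOpen W ∧ 0 ∈ W ∧ -W = W := by
  obtain ⟨O, hOU, hO, hO0⟩ := mem_nhds_iff.1 hU
  exact ⟨O ∩ -O, inter_subset_left.trans hOU, hO.inter hO.neg, ⟨hO0, by simpa using hO0⟩,
    by rw [inter_neg, neg_neg, inter_comm]⟩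

theorem IsUFSS.of_isDenseInducing [TopologicalSpace A] [TopologicalSpace B]
    [IsTopologicalAddGroup B] (hA : IsUFSS A) {f : A →+ B} (hf : IsDenseInducing f) :
    IsUFSS B := by
  obtain ⟨U, hU, -, -, hbasis⟩ := hA
  have hnhds : 𝓝 (0 : A) = comap f (𝓝 0) := by rw [hf.nhds_eq_comap, map_zero]
  rw [hnhds] at hU hbasis
  obtain ⟨V, hV, hVU⟩ := mem_comap.1 hU
  obtain ⟨W, hWV, hW, hW0, hW_neg⟩ := exists_isOpen_neg_eq_self_subset hV
  refine ⟨W, hW.mem_nhds hW0, fun x hx => mem_neg.1 (hW_neg.symm ▸ hx),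
    fun n _ => (isOpen_invDiv n hW).mem_nhds (zero_mem_invDiv n hW0), fun O hO => ?_⟩
  obtain ⟨C, hC, hC_closed, hCO⟩ := exists_mem_nhds_isClosed_subset hO
  obtain ⟨n, hn, hnC⟩ := hbasis (f ⁻¹' C) (preimage_mem_comap hC)
  have hpre : f ⁻¹' invDiv n W ⊆ f ⁻¹' C := by
    rw [preimage_invDiv]
    exact (invDiv_mono n ((preimage_mono hWV).trans hVU)).trans hnC
  exact ⟨n, hn, (subset_of_preimage_subset_of_denseRange hf.dense (isOpen_invDiv n hW)
    hC_closed hpre).trans hCO⟩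

end UFSS

section Quotient

variable {A B : Type*} [AddGroup A] [AddGroup B] [TopologicalSpace B] {f : A →+ B}
  {N : AddSubgroup A} [N.Normal]

theorem denseRange_quotientAddGroup_map {M : AddSubgroup B} [M.Normal]
    (hNM : N ≤ M.comap f) (hf : DenseRange f) : DenseRange (QuotientAddGroup.map N M f hNM) := by
  have hcomp : DenseRange (QuotientAddGroup.map N M f hNM ∘ QuotientAddGroup.mk) :=
    (QuotientAddGroup.mk_surjective (s := M)).denseRange.comp hf QuotientAddGroup.continuous_mk
  exact hcomp.mono (range_comp_subset_range _ _)

variable [IsTopologicalAddGroup B] [(N.map f).topologicalClosure.Normal]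

theorem preimage_quotientAddGroup_map_image_mk
    (hN : N ≤ (N.map f).topologicalClosure.comap f) {O : Set B} (hO : IsOpen O) :
    QuotientAddGroup.map N (N.map f).topologicalClosure f hN ⁻¹' (QuotientAddGroup.mk '' O) =
      QuotientAddGroup.mk '' (f ⁻¹' O) := by
  have hadd : O + ((N.map f).topologicalClosure : Set B) = O + f '' N := hO.add_closure _
  ext q
  obtain ⟨a, rfl⟩ := QuotientAddGroup.mk_surjective q
  calc
    _ ↔ f a ∈ O + f '' N := by
      rw [← hadd, ← QuotientAddGroup.preimage_image_mk_eq_add]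
      rfl
    _ ↔ a ∈ f ⁻¹' O + N := by
      constructor
      · rintro ⟨o, ho, _, ⟨n, hn, rfl⟩, hsum⟩
        refine ⟨a - n, ?_, n, hn, sub_add_cancel a n⟩
        rwa [mem_preimage, map_sub, ← hsum, add_sub_cancel_right]
      · rintro ⟨o, ho, n, hn, rfl⟩
        exact ⟨f o, ho, f n, mem_image_of_mem f hn, (map_add f o n).symm⟩
    _ ↔ _ := by
      rw [← QuotientAddGroup.preimage_image_mk_eq_add]
      rfl

theorem isInducing_quotientAddGroup_map [TopologicalSpace A]
    (hN : N ≤ (N.map f).topologicalClosure.comap f) (hf : IsInducing f) :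
    IsInducing (QuotientAddGroup.map N (N.map f).topologicalClosure f hN) := by
  refine ⟨le_antisymm (continuous_iff_le_induced.1 ?_) fun U hU => ?_⟩
  · exact ((QuotientAddGroup.continuous_mk (N := (N.map f).topologicalClosure)).comp
      hf.continuous).quotient_lift _
  · obtain ⟨O, hO, hOU⟩ := hf.isOpen_iff.1 (hU.preimage QuotientAddGroup.continuous_mk)
    refine ⟨QuotientAddGroup.mk '' O, QuotientAddGroup.isOpenMap_coe O hO, ?_⟩
    rw [preimage_quotientAddGroup_map_image_mk hN hO, hOU,
      image_preimage_eq U QuotientAddGroup.mk_surjective]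

end Quotient

/-- If a dense subgroup `H` of a Hausdorff abelian topological group `G` is almost
minimal, then so is `G`. -/
theorem almostMinimal_of_dense_almostMinimal {G : Type*} [AddCommGroup G]
    [TopologicalSpace G] [IsTopologicalAddGroup G] [T2Space G]
    (H : AddSubgroup G) (hd : Dense (H : Set G)) (h : IsAlmostMinimal ↥H) :
    IsAlmostMinimal G := by
  obtain ⟨N, -, hN_minimal, hN_ufss⟩ := h
  have hH : IsDenseEmbedding H.subtype := hd.isDenseEmbedding_val
  let M : AddSubgroup G := (N.map H.subtype).topologicalClosure
  have hNM : N ≤ M.comap H.subtype :=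
    AddSubgroup.map_le_iff_le_comap.1 (N.map H.subtype).le_topologicalClosure
  have hquot : IsDenseInducing (QuotientAddGroup.map N M H.subtype hNM) :=
    ⟨isInducing_quotientAddGroup_map hNM hH.isInducing,
      denseRange_quotientAddGroup_map hNM hH.dense⟩
  exact ⟨M, AddSubgroup.isClosed_topologicalClosure _,
    hN_minimal.topologicalClosure_map hH.isEmbedding, hN_ufss.of_isDenseInducing hquot⟩
end

section
/- Let A be a Hausdorff abelian topological group, let G be a closed subgroup of A and B a compact subgroup of A, and set N := B ∩ G. Then the canonical map ι : G/N → A/B, x + N ↦ x + B, is a topological embedding (a homeomorphism onto its image). -/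
section QuotientMap

variable {H A : Type*} [AddGroup H] [AddGroup A] {f : H →+ A}

theorem quotientAddGroup_map_comap_injective (f : H →+ A) (B : AddSubgroup A) [B.Normal] :
    Function.Injective (QuotientAddGroup.map (B.comap f) B f le_rfl) := by
  rw [← AddMonoidHom.ker_eq_bot_iff, QuotientAddGroup.ker_map, QuotientAddGroup.map_mk'_self]

variable [TopologicalSpace H] [TopologicalSpace A]

theorem continuous_quotientAddGroup_map (hf : Continuous f) {N : AddSubgroup H} [N.Normal]
    {B : AddSubgroup A} [B.Normal] (hNB : N ≤ B.comap f) :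
    Continuous (QuotientAddGroup.map N B f hNB) :=
  (QuotientAddGroup.isQuotientMap_mk N).continuous_iff.2 (QuotientAddGroup.continuous_mk.comp hf)

theorem isClosedMap_quotientAddGroup_map [IsTopologicalAddGroup A] (hf : IsClosedMap f)
    {N : AddSubgroup H} [N.Normal] {B : AddSubgroup A} [B.Normal] (hB : IsCompact (B : Set A))
    (hNB : N ≤ B.comap f) : IsClosedMap (QuotientAddGroup.map N B f hNB) :=
  .of_comp_surjective QuotientAddGroup.mk_surjective QuotientAddGroup.continuous_mk
    ((QuotientAddGroup.isClosedMap_coe hB).comp hf)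

theorem quotient_map_embedding_general [IsTopologicalAddGroup A] (hf : Continuous f)
    (hf_closed : IsClosedMap f) {B : AddSubgroup A} [B.Normal] (hB : IsCompact (B : Set A)) :
    Topology.IsClosedEmbedding (QuotientAddGroup.map (B.comap f) B f le_rfl) :=
  .of_continuous_injective_isClosedMap (continuous_quotientAddGroup_map hf le_rfl)
    (quotientAddGroup_map_comap_injective f B)
    (isClosedMap_quotientAddGroup_map hf_closed hB le_rfl)

end QuotientMap

/-- Open mapping theorem for quotients: if `G` is a closed subgroup and `B` a compact
subgroup of a Hausdorff abelian topological group `A`, and `N := B ∩ G`, then the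
canonical map `ι : G/N → A/B`, `x + N ↦ x + B`, is a topological embedding. -/
theorem quotient_map_embedding {A : Type*} [AddCommGroup A] [TopologicalSpace A]
    [IsTopologicalAddGroup A] [T2Space A] (G B : AddSubgroup A)
    (hG : IsClosed (G : Set A)) (hB : IsCompact (B : Set A)) :
    Topology.IsEmbedding (QuotientAddGroup.map (B.addSubgroupOf G) B G.subtype le_rfl) :=
  (quotient_map_embedding_general (f := G.subtype) continuous_subtype_val
    hG.isClosedMap_subtype_val hB).isEmbedding
end
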